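/- arXiv:1402.5739 — 8 statements merged into one kernel-verified Lean document; each statement's English description precedes it below -/
import Mathlib

section
/- For all integers w and k with w ≥ 3 and ⌈w/2⌉ ≤ k, there exists a comparability 3-hypergraph H with clique number ω(H) = w and chromatic number χ(H) ≥ k. -/
open scoped Classical

/-- A `3`-hypergraph: a finite vertex set together with a finite set of edges,
each edge intended to be a 3-element subset of the vertex set. -/
structure ThreeHypergraph (α : Type*) where
  verts : Finset α
  edges : Finset (Finset α)

namespace ThreeHypergraph

variable {α : Type*}

/-- The structural requirements on a `3`-hypergraph: every edge is a
3-element subset of the vertex set. -/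
def IsValid (H : ThreeHypergraph α) : Prop :=
  ∀ e ∈ H.edges, e.card = 3 ∧ e ⊆ H.verts

/-- A proper colouring with `k` colours: a partition of the vertices into (at most)
`k` colour classes such that no edge is contained in a single class. -/
def ProperColoring (H : ThreeHypergraph α) (k : ℕ) : Prop :=
  ∃ c : α → ℕ, (∀ v ∈ H.verts, c v < k) ∧
    ∀ e ∈ H.edges, ¬ ∃ i : ℕ, ∀ v ∈ e, c v = i

/-- The chromatic number: the least `k` admitting a proper colouring. -/
noncomputable def chromaticNumber (H : ThreeHypergraph α) : ℕ :=
  sInf {k | H.ProperColoring k}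

/-- A clique: a set of vertices all of whose 3-element subsets are edges. -/
def IsClique (H : ThreeHypergraph α) (S : Finset α) : Prop :=
  S ⊆ H.verts ∧ ∀ t ⊆ S, t.card = 3 → t ∈ H.edges

/-- The clique number: the largest cardinality of a clique. -/
noncomputable def cliqueNumber (H : ThreeHypergraph α) : ℕ :=
  sSup {m | ∃ S : Finset α, H.IsClique S ∧ S.card = m}

end ThreeHypergraph

variable {α : Type*}

/-- An orientation of a `3`-hypergraph: a set of ordered triples (given as a ternary
relation), closed under cyclic rotation, containing for each edge exactly one of the two
rotation classes of its three vertices, and containing no other triples. -/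
def IsOrientation [DecidableEq α] (H : ThreeHypergraph α) (O : α → α → α → Prop) : Prop :=
  (∀ u v w, O u v w → ({u, v, w} : Finset α) ∈ H.edges) ∧
  (∀ u v w, O u v w → O v w u) ∧
  (∀ u v w, ({u, v, w} : Finset α) ∈ H.edges → (O u v w ↔ ¬ O u w v))

/-- Transitivity for an oriented `3`-hypergraph: whenever `(u v z)` and `(z v w)` are
oriented edges, so is `(u v w)`. -/
def IsTransitiveRel (O : α → α → α → Prop) : Prop :=
  ∀ u v z w, O u v z → O z v w → O u v w

/-- A transitive orientation of a `3`-hypergraph. -/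
def IsTransitiveOrientation [DecidableEq α] (H : ThreeHypergraph α)
    (O : α → α → α → Prop) : Prop :=
  IsOrientation H O ∧ IsTransitiveRel O

/-- A comparability `3`-hypergraph: one admitting a transitive orientation. -/
def IsComparability [DecidableEq α] (H : ThreeHypergraph α) : Prop :=
  ∃ O : α → α → α → Prop, IsTransitiveOrientation H O

/-!
Transitivity constrains only pairs of oriented triples with two common vertices. A linear
hypergraph has no two distinct edges of this kind, so any orientation of it is transitive, whereas
its chromatic number may be arbitrarily large: take the points of a cube `ι → Fin 3` as vertices and
the combinatorial lines as edges; by the Hales–Jewett theorem, every colouring with a given number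
of colours has a monochromatic edge once `ι` is large. The cliques of a linear hypergraph have at
most three vertices, so its disjoint union with a complete hypergraph on `w ≥ 3` vertices, which is
transitively oriented by any cyclic order, has clique number `w`.
-/

theorem sbtw_iff_not_sbtw_swap [CircularOrder α] {u v w : α}
    (huv : u ≠ v) (huw : u ≠ w) (hvw : v ≠ w) : sbtw u v w ↔ ¬ sbtw u w v := by
  refine ⟨fun h h' => h.not_sbtw h'.cyclic_left, fun h => ?_⟩
  have hbtw : btw u v w := (btw_iff_not_sbtw.2 h).cyclic_right
  refine hbtw.sbtw_of_not_btw fun hbtw' => ?_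
  rcases hbtw.antisymm hbtw' with h | h | h
  exacts [huv h, hvw h, huw h.symm]

theorem sbtw_trans_swap [CircularPreorder α] {u v z w : α} (h : sbtw u v z) (h' : sbtw z v w) :
    sbtw u v w :=
  (h'.cyclic_left.trans_right h.cyclic_left).cyclic_right

theorem nonempty_circularOrder (α : Type*) : Nonempty (CircularOrder α) :=
  let _ : LinearOrder α := linearOrderOfSTO WellOrderingRel
  ⟨LinearOrder.toCircularOrder α⟩

theorem line_apply_injective {κ ι : Type*} (l : Combinatorics.Line κ ι) :
    Function.Injective l := by
  intro a b hab
  obtain ⟨i, hi⟩ := l.proper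
  simpa [hi] using congrFun hab i

theorem line_eq_of_apply_eq {κ ι : Type*} {l m : Combinatorics.Line κ ι} {a b c d : κ}
    (hab : a ≠ b) (hac : l a = m c) (hbd : l b = m d) : l = m := by
  have hcd : c ≠ d := by
    rintro rfl
    exact hab (line_apply_injective l (hac.trans hbd.symm))
  ext1
  funext i
  have hac_i := congrFun hac i
  have hbd_i := congrFun hbd i
  simp only [Combinatorics.Line.coe_apply] at hac_i hbd_i
  cases hl : l.idxFun i <;> cases hm : m.idxFun i <;> simp_all

instance finite_line {κ ι : Type*} [Finite κ] [Finite ι] : Finite (Combinatorics.Line κ ι) :=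
  Finite.of_injective Combinatorics.Line.idxFun fun _ _ => Combinatorics.Line.ext

theorem ne_of_card_triple_eq_three [DecidableEq α] {u v w : α}
    (h : ({u, v, w} : Finset α).card = 3) : u ≠ v ∧ u ≠ w ∧ v ≠ w := by
  have hlt : ∀ x y : α, ({x, y} : Finset α).card ≠ 3 := fun x y hxy =>
    absurd (hxy ▸ Finset.card_le_two) (by decide)
  refine ⟨?_, ?_, ?_⟩ <;> rintro rfl
  · exact hlt u w (by simpa using h)
  · exact hlt v u (by simpa [Finset.insert_comm] using h)
  · exact hlt u v (by simpa using h)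

namespace ThreeHypergraph

section Coloring

variable {G H : ThreeHypergraph α}

theorem IsValid.exists_properColoring (hH : H.IsValid) : ∃ k, H.ProperColoring k := by
  let index := H.verts.equivFin
  refine ⟨H.verts.card, fun v => if hv : v ∈ H.verts then index ⟨v, hv⟩ else 0,
    fun v hv => by simp [hv], ?_⟩
  rintro e he ⟨i, hi⟩
  obtain ⟨hcard, hsub⟩ := hH e he
  obtain ⟨a, ha, b, hb, hab⟩ := Finset.one_lt_card.1 (show 1 < e.card by omega)
  have hindex := (hi a ha).trans (hi b hb).symm
  simp only [hsub ha, hsub hb, dite_true] at hindex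
  exact hab (congrArg Subtype.val (index.injective (Fin.ext hindex)))

theorem IsValid.properColoring_chromaticNumber (hH : H.IsValid) :
    H.ProperColoring H.chromaticNumber :=
  Nat.sInf_mem hH.exists_properColoring

theorem ProperColoring.anti {k : ℕ} (hverts : G.verts ⊆ H.verts) (hedges : G.edges ⊆ H.edges)
    (h : H.ProperColoring k) : G.ProperColoring k :=
  let ⟨c, hlt, hproper⟩ := h
  ⟨c, fun v hv => hlt v (hverts hv), fun e he => hproper e (hedges he)⟩

theorem IsValid.chromaticNumber_mono (hH : H.IsValid) (hverts : G.verts ⊆ H.verts)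
    (hedges : G.edges ⊆ H.edges) : G.chromaticNumber ≤ H.chromaticNumber :=
  Nat.sInf_le (hH.properColoring_chromaticNumber.anti hverts hedges)

end Coloring

section CircularOrientation

variable [DecidableEq α] [CircularOrder α]

/-- The orientation of a `3`-hypergraph induced by a circular order of its vertices: every edge is
traversed in the direction of the circular order. -/
def circularOrientation (H : ThreeHypergraph α) (u v w : α) : Prop :=
  {u, v, w} ∈ H.edges ∧ sbtw u v w

theorem IsValid.isOrientation_circularOrientation {H : ThreeHypergraph α} (hH : H.IsValid) :
    IsOrientation H H.circularOrientation := by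
  refine ⟨fun u v w h => h.1, fun u v w h => ⟨?_, h.2.cyclic_left⟩, fun u v w h => ?_⟩
  · rw [Finset.pair_comm w u, Finset.insert_comm v u]
    exact h.1
  · obtain ⟨huv, huw, hvw⟩ := ne_of_card_triple_eq_three (hH _ h).1
    have hswap : {u, w, v} ∈ H.edges := by rwa [Finset.pair_comm w v]
    simpa only [circularOrientation, h, hswap, true_and] using sbtw_iff_not_sbtw_swap huv huw hvw

end CircularOrientation

section Complete

/-- The complete `3`-hypergraph on the vertex set `s`. -/
def complete (s : Finset α) : ThreeHypergraph α where
  verts := s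
  edges := s.powersetCard 3

variable {s : Finset α}

theorem isValid_complete : (complete s).IsValid := fun _ he =>
  (Finset.mem_powersetCard.1 he).symm

theorem isClique_complete : (complete s).IsClique s :=
  ⟨subset_rfl, fun _ ht hcard => Finset.mem_powersetCard.2 ⟨ht, hcard⟩⟩

theorem isComparability_complete [DecidableEq α] : IsComparability (complete s) := by
  obtain ⟨_⟩ := nonempty_circularOrder α
  refine ⟨(complete s).circularOrientation,
    isValid_complete.isOrientation_circularOrientation, ?_⟩
  rintro u v z w ⟨huvz, hsbtw⟩ ⟨hzvw, hsbtw'⟩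
  have huvw := sbtw_trans_swap hsbtw hsbtw'
  refine ⟨Finset.mem_powersetCard.2 ⟨?_, Finset.card_eq_three.2 ⟨u, v, w, ?_, ?_, ?_, rfl⟩⟩, huvw⟩
  · have hsub := (isValid_complete _ huvz).2
    have hsub' := (isValid_complete _ hzvw).2
    simp only [Finset.insert_subset_iff, Finset.singleton_subset_iff] at hsub hsub' ⊢
    exact ⟨hsub.1, hsub.2.1, hsub'.2.2⟩
  · rintro rfl
    exact sbtw_irrefl_left huvw
  · rintro rfl
    exact sbtw_irrefl_left_right huvw
  · rintro rfl
    exact sbtw_irrefl_right huvw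

end Complete

section Linear

/-- A `3`-hypergraph is linear if two distinct vertices lie in at most one common edge. -/
def IsLinear (H : ThreeHypergraph α) : Prop :=
  ∀ ⦃e⦄, e ∈ H.edges → ∀ ⦃f⦄, f ∈ H.edges →
    ∀ ⦃a b⦄, a ≠ b → a ∈ e → b ∈ e → a ∈ f → b ∈ f → e = f

variable {H : ThreeHypergraph α}

theorem IsLinear.isTransitiveRel [DecidableEq α] (hlin : H.IsLinear) (hH : H.IsValid)
    {O : α → α → α → Prop} (hO : IsOrientation H O) : IsTransitiveRel O := by
  obtain ⟨hedge, hrotate, hunique⟩ := hO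
  intro u v z w huvz hzvw
  obtain ⟨-, -, hvz⟩ := ne_of_card_triple_eq_three (hH _ (hedge u v z huvz)).1
  obtain ⟨-, hzw, hvw⟩ := ne_of_card_triple_eq_three (hH _ (hedge z v w hzvw)).1
  have heq : ({u, v, z} : Finset α) = {z, v, w} :=
    hlin (hedge u v z huvz) (hedge z v w hzvw) hvz (by simp) (by simp) (by simp) (by simp)
  have hw : w ∈ ({u, v, z} : Finset α) := by simp [heq]
  obtain rfl : w = u := by simpa [hzw.symm, hvw.symm] using hw
  have hwzv : O w z v := hrotate v w z (hrotate z v w hzvw)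
  exact absurd hwzv ((hunique w v z (hedge w v z huvz)).1 huvz)

theorem IsLinear.isComparability [DecidableEq α] (hlin : H.IsLinear) (hH : H.IsValid) :
    IsComparability H := by
  obtain ⟨_⟩ := nonempty_circularOrder α
  exact ⟨H.circularOrientation, hH.isOrientation_circularOrientation,
    hlin.isTransitiveRel hH hH.isOrientation_circularOrientation⟩

theorem IsLinear.card_le_three_of_isClique (hlin : H.IsLinear) {S : Finset α}
    (hS : H.IsClique S) : S.card ≤ 3 := by
  by_contra! hcard
  obtain ⟨e, heS, he⟩ := Finset.exists_subset_card_eq hcard.le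
  obtain ⟨d, hdS, hde⟩ := Finset.exists_mem_notMem_of_card_lt_card (he ▸ hcard)
  obtain ⟨a, b, c, hab, -, -, rfl⟩ := Finset.card_eq_three.1 he
  have had : a ≠ d := by rintro rfl; simp at hde
  have hbd : b ≠ d := by rintro rfl; simp at hde
  have hsub : {a, b, d} ⊆ S := by
    simp only [Finset.insert_subset_iff, Finset.singleton_subset_iff] at heS ⊢
    exact ⟨heS.1, heS.2.1, hdS⟩
  have heq : {a, b, c} = {a, b, d} :=
    hlin (hS.2 _ heS he)
      (hS.2 _ hsub (Finset.card_eq_three.2 ⟨a, b, d, hab, had, hbd, rfl⟩))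
      hab (by simp) (by simp) (by simp) (by simp)
  exact hde (heq ▸ by simp)

end Linear

section Union

variable [DecidableEq α]

/-- The union of two `3`-hypergraphs; it is their disjoint union when the vertex sets are
disjoint. -/
protected def union (G H : ThreeHypergraph α) : ThreeHypergraph α where
  verts := G.verts ∪ H.verts
  edges := G.edges ∪ H.edges

variable {G H : ThreeHypergraph α}

theorem mem_edges_union {e : Finset α} : e ∈ (G.union H).edges ↔ e ∈ G.edges ∨ e ∈ H.edges :=
  Finset.mem_union

theorem IsValid.union (hG : G.IsValid) (hH : H.IsValid) : (G.union H).IsValid := by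
  intro e he
  rcases mem_edges_union.1 he with he | he
  · exact ⟨(hG e he).1, (hG e he).2.trans Finset.subset_union_left⟩
  · exact ⟨(hH e he).1, (hH e he).2.trans Finset.subset_union_right⟩

theorem IsValid.mem_verts_of_isOrientation {O : α → α → α → Prop} (hH : H.IsValid)
    (hO : IsOrientation H O) {u v w : α} (h : O u v w) : v ∈ H.verts :=
  (hH _ (hO.1 _ _ _ h)).2 (by simp)

theorem IsComparability.union (hGcomp : IsComparability G) (hHcomp : IsComparability H)
    (hG : G.IsValid) (hH : H.IsValid) (hdisj : Disjoint G.verts H.verts) :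
    IsComparability (G.union H) := by
  obtain ⟨P, hP, hPtrans⟩ := hGcomp
  obtain ⟨Q, hQ, hQtrans⟩ := hHcomp
  have notMem_right : ∀ {v}, v ∈ G.verts → v ∉ H.verts := fun hv => Finset.disjoint_left.1 hdisj hv
  refine ⟨fun u v w => P u v w ∨ Q u v w, ⟨fun u v w h => ?_, fun u v w h => ?_,
    fun u v w h => ?_⟩, ?_⟩
  · exact mem_edges_union.2 (h.imp (hP.1 u v w) (hQ.1 u v w))
  · exact h.imp (hP.2.1 u v w) (hQ.2.1 u v w)
  · rcases mem_edges_union.1 h with h | h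
    · have hQ_false : ∀ {x y z}, y ∈ ({u, v, w} : Finset α) → ¬ Q x y z := fun hy hxyz =>
        notMem_right ((hG _ h).2 hy) (hH.mem_verts_of_isOrientation hQ hxyz)
      simpa [hQ_false] using hP.2.2 u v w h
    · have hP_false : ∀ {x y z}, y ∈ ({u, v, w} : Finset α) → ¬ P x y z := fun hy hxyz =>
        notMem_right (hG.mem_verts_of_isOrientation hP hxyz) ((hH _ h).2 hy)
      simpa [hP_false] using hQ.2.2 u v w h
  · rintro u v z w (h | h) (h' | h')
    · exact Or.inl (hPtrans u v z w h h')
    · exact absurd (hH.mem_verts_of_isOrientation hQ h')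
        (notMem_right (hG.mem_verts_of_isOrientation hP h))
    · exact absurd (hH.mem_verts_of_isOrientation hQ h)
        (notMem_right (hG.mem_verts_of_isOrientation hP h'))
    · exact Or.inr (hQtrans u v z w h h')

theorem IsClique.union_left {S : Finset α} (hS : G.IsClique S) : (G.union H).IsClique S :=
  ⟨hS.1.trans Finset.subset_union_left,
    fun t ht hcard => mem_edges_union.2 (Or.inl (hS.2 t ht hcard))⟩

theorem IsClique.subset_or_subset_of_union {S : Finset α} (hG : G.IsValid) (hH : H.IsValid)
    (hS : (G.union H).IsClique S) (hcard : 3 ≤ S.card) : S ⊆ G.verts ∨ S ⊆ H.verts := by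
  by_contra! hnot
  obtain ⟨x, hxS, hxG⟩ := Finset.not_subset.1 hnot.1
  obtain ⟨y, hyS, hyH⟩ := Finset.not_subset.1 hnot.2
  have hpair : {x, y} ⊆ S := Finset.insert_subset hxS (Finset.singleton_subset_iff.2 hyS)
  obtain ⟨t, hxyt, htS, ht⟩ :=
    Finset.exists_subsuperset_card_eq hpair (Finset.card_le_two.trans (by decide)) hcard
  rcases mem_edges_union.1 (hS.2 t htS ht) with he | he
  · exact hxG ((hG t he).2 (hxyt (by simp)))
  · exact hyH ((hH t he).2 (hxyt (by simp)))

theorem IsClique.of_union_of_subset_right {S : Finset α} (hG : G.IsValid)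
    (hdisj : Disjoint G.verts H.verts) (hS : (G.union H).IsClique S) (hSH : S ⊆ H.verts) :
    H.IsClique S := by
  refine ⟨hSH, fun t ht hcard => (mem_edges_union.1 (hS.2 t ht hcard)).resolve_left fun he => ?_⟩
  have hempty : t = ∅ :=
    Finset.disjoint_self_iff_empty t |>.1 (hdisj.mono (hG t he).2 (ht.trans hSH))
  simp [hempty] at hcard

theorem cliqueNumber_complete_union {s : Finset α} (hs : 3 ≤ s.card) (hH : H.IsValid)
    (hdisj : Disjoint s H.verts) (hclique : ∀ S, H.IsClique S → S.card ≤ s.card) :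
    ((complete s).union H).cliqueNumber = s.card := by
  refine IsGreatest.csSup_eq ⟨⟨s, isClique_complete.union_left, rfl⟩, ?_⟩
  rintro _ ⟨S, hS, rfl⟩
  rcases lt_or_ge S.card 3 with hlt | hge
  · exact (hlt.trans_le hs).le
  rcases hS.subset_or_subset_of_union isValid_complete hH hge with hsub | hsub
  · exact Finset.card_le_card hsub
  · exact hclique S (hS.of_union_of_subset_right isValid_complete hdisj hsub)

end Union

section Lines

variable {ι : Type*} [Finite ι]

/-- The `3`-hypergraph of combinatorial lines of the cube `ι → Fin 3`, whose points are realised in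
the type `α` by means of the embedding `f`. -/
noncomputable def lineHypergraph (f : (ι → Fin 3) ↪ α) : ThreeHypergraph α where
  verts := (Set.finite_range f).toFinset
  edges := (Set.finite_range fun l : Combinatorics.Line (Fin 3) ι =>
    Finset.univ.map (.trans ⟨l, line_apply_injective l⟩ f)).toFinset

variable (f : (ι → Fin 3) ↪ α)

theorem mem_verts_lineHypergraph {v : α} : v ∈ (lineHypergraph f).verts ↔ ∃ x, f x = v := by
  simp [lineHypergraph]

theorem mem_edges_lineHypergraph {e : Finset α} :
    e ∈ (lineHypergraph f).edges ↔ ∃ l : Combinatorics.Line (Fin 3) ι,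
      Finset.univ.map (.trans ⟨l, line_apply_injective l⟩ f) = e := by
  simp [lineHypergraph]

theorem isValid_lineHypergraph : (lineHypergraph f).IsValid := by
  intro e he
  obtain ⟨l, rfl⟩ := (mem_edges_lineHypergraph f).1 he
  refine ⟨by simp, fun v hv => ?_⟩
  obtain ⟨a, -, rfl⟩ := Finset.mem_map.1 hv
  exact (mem_verts_lineHypergraph f).2 ⟨l a, rfl⟩

theorem isLinear_lineHypergraph : (lineHypergraph f).IsLinear := by
  intro e he e' he' x y hxy hxe hye hxe' hye'
  obtain ⟨l, rfl⟩ := (mem_edges_lineHypergraph f).1 he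
  obtain ⟨m, rfl⟩ := (mem_edges_lineHypergraph f).1 he'
  obtain ⟨a, -, rfl⟩ := Finset.mem_map.1 hxe
  obtain ⟨b, -, rfl⟩ := Finset.mem_map.1 hye
  obtain ⟨c, -, hc⟩ := Finset.mem_map.1 hxe'
  obtain ⟨d, -, hd⟩ := Finset.mem_map.1 hye'
  have hab : a ≠ b := fun h => hxy (by rw [h])
  rw [line_eq_of_apply_eq hab (f.injective hc).symm (f.injective hd).symm]

theorem exists_forall_le_chromaticNumber_lineHypergraph (α : Type*) (k : ℕ) :
    ∃ (ι : Type) (_ : Finite ι), ∀ f : (ι → Fin 3) ↪ α, k ≤ (lineHypergraph f).chromaticNumber := by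
  obtain ⟨ι, hfin, hmono⟩ := Combinatorics.Line.exists_mono_in_high_dimension (Fin 3) (Fin k)
  refine ⟨ι, inferInstance, fun f => ?_⟩
  by_contra! hlt
  obtain ⟨c, hc, hproper⟩ := (isValid_lineHypergraph f).properColoring_chromaticNumber
  have hck : ∀ x, c (f x) < k := fun x =>
    (hc _ ((mem_verts_lineHypergraph f).2 ⟨x, rfl⟩)).trans hlt
  obtain ⟨l, i, hi⟩ := hmono fun x => ⟨c (f x), hck x⟩
  refine hproper _ ((mem_edges_lineHypergraph f).2 ⟨l, rfl⟩) ⟨i, fun v hv => ?_⟩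
  obtain ⟨a, -, rfl⟩ := Finset.mem_map.1 hv
  exact congrArg Fin.val (hi a)

theorem exists_isLinear_le_chromaticNumber [Infinite α] (s : Finset α) (k : ℕ) :
    ∃ H : ThreeHypergraph α,
      H.IsValid ∧ H.IsLinear ∧ Disjoint s H.verts ∧ k ≤ H.chromaticNumber := by
  obtain ⟨ι, _, hk⟩ := exists_forall_le_chromaticNumber_lineHypergraph α k
  obtain ⟨toNat⟩ := nonempty_embedding_nat (ι → Fin 3)
  let toCompl : ℕ ↪ ((s : Set α)ᶜ : Set α) := s.finite_toSet.infinite_compl.natEmbedding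
  let f : (ι → Fin 3) ↪ α := (toNat.trans toCompl).trans (.subtype _)
  refine ⟨lineHypergraph f, isValid_lineHypergraph f, isLinear_lineHypergraph f,
    Finset.disjoint_right.2 fun v hv => ?_, hk f⟩
  obtain ⟨x, rfl⟩ := (mem_verts_lineHypergraph f).1 hv
  exact (toCompl (toNat x)).2

end Lines

end ThreeHypergraph

open ThreeHypergraph in
theorem exists_comparability_large_chromatic_general [DecidableEq α] [Infinite α] (w k : ℕ)
    (hw : 3 ≤ w) :
    ∃ H : ThreeHypergraph α, H.IsValid ∧ IsComparability H ∧
      H.cliqueNumber = w ∧ k ≤ H.chromaticNumber := by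
  obtain ⟨s, rfl⟩ := Infinite.exists_subset_card_eq α w
  obtain ⟨L, hL, hlin, hdisj, hk⟩ := exists_isLinear_le_chromaticNumber s k
  have hvalid : ((complete s).union L).IsValid := isValid_complete.union hL
  refine ⟨(complete s).union L, hvalid, ?_, ?_, ?_⟩
  · exact isComparability_complete.union (hlin.isComparability hL) isValid_complete hL hdisj
  · exact cliqueNumber_complete_union hw hL hdisj fun S hS =>
      (hlin.card_le_three_of_isClique hS).trans hw
  · exact hk.trans
      (hvalid.chromaticNumber_mono Finset.subset_union_right Finset.subset_union_right)

/-- For all integers `w ≥ 3` and `k ≥ ⌈w/2⌉`, there is a comparability 3-hypergraph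
with clique number `w` and chromatic number at least `k`. -/
theorem exists_comparability_large_chromatic (w k : ℕ) (hw : 3 ≤ w) (hk : (w + 1) / 2 ≤ k) :
    ∃ H : ThreeHypergraph ℕ, H.IsValid ∧ IsComparability H ∧
      H.cliqueNumber = w ∧ k ≤ H.chromaticNumber :=
  exists_comparability_large_chromatic_general w k hw
end

section
/- If H is a comparability 3-hypergraph, then the Mycielski-type 3-hypergraph μ(H) is also a comparability 3-hypergraph. More precisely, given a transitive orientation O(H) of H, the orientation O(μ(H)) defined by: (i) each edge {(u,1),(u,2),w} of E₂ is oriented as ((u,1) (u,2) w), and (ii) each edge {(u₁,t₁),(u₂,t₂),(u₃,t₃)} of E₁ is oriented as ((u₁,t₁) (u₂,t₂) (u₃,t₃)) if and only if (u₁ u₂ u₃) ∈ O(H), is a transitive orientation of μ(H). -/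
open scoped Classical

variable {α : Type*}

/-- The Mycielski-type `3`-hypergraph `μ(H)`: vertices are two copies of `V(H)`
(encoded as `some (v, 0)` and `some (v, 1)`) together with a new vertex `w = none`;
edges are the triples projecting onto an edge of `H` (`E₁`) together with the triples
`{(u,1), (u,2), w}` for `u ∈ V(H)` (`E₂`). -/
noncomputable def mycielski {α : Type*} [DecidableEq α] (H : ThreeHypergraph α) :
    ThreeHypergraph (Option (α × Fin 2)) where
  verts := (H.verts ×ˢ (Finset.univ : Finset (Fin 2))).image some ∪ {none}
  edges := (Finset.powersetCard 3
      ((H.verts ×ˢ (Finset.univ : Finset (Fin 2))).image some ∪ {none})).filter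
    (fun e =>
      (∃ u₁ u₂ u₃ : α, ∃ t₁ t₂ t₃ : Fin 2, ({u₁, u₂, u₃} : Finset α) ∈ H.edges ∧
        e = {some (u₁, t₁), some (u₂, t₂), some (u₃, t₃)}) ∨
      (∃ u : α, u ∈ H.verts ∧ e = {some (u, 0), some (u, 1), none}))

/-- The orientation of `μ(H)` induced by an orientation `O` of `H`:
each `E₂` edge `{(u,1), (u,2), w}` is oriented as `((u,1) (u,2) w)` (together with its
cyclic rotations), and each `E₁` edge is oriented as `((u₁,t₁) (u₂,t₂) (u₃,t₃))` iff
`(u₁ u₂ u₃) ∈ O`. -/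
inductive mycOrient {α : Type*} (H : ThreeHypergraph α) (O : α → α → α → Prop) :
    Option (α × Fin 2) → Option (α × Fin 2) → Option (α × Fin 2) → Prop where
  | e2a (u : α) (hu : u ∈ H.verts) : mycOrient H O (some (u, 0)) (some (u, 1)) none
  | e2b (u : α) (hu : u ∈ H.verts) : mycOrient H O (some (u, 1)) none (some (u, 0))
  | e2c (u : α) (hu : u ∈ H.verts) : mycOrient H O none (some (u, 0)) (some (u, 1))
  | e1 (u₁ u₂ u₃ : α) (t₁ t₂ t₃ : Fin 2) (h : O u₁ u₂ u₃) :
      mycOrient H O (some (u₁, t₁)) (some (u₂, t₂)) (some (u₃, t₃))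

/-!
Every edge through the new vertex `none` is an `E₂` edge, and an `E₂` edge is determined by any two
of its vertices. The three vertices of an `E₁` edge project to distinct vertices of `H`, so an `E₁`
edge and an `E₂` edge have at most one vertex in common. Consequently two oriented edges `(a v z)`
and `(z v c)` are both in `E₁`, where transitivity is that of `O`, or they are the same `E₂` edge
with opposite orientations, which is impossible.
-/

theorem triple_rotate {β : Type*} [DecidableEq β] (a b c : β) :
    ({a, b, c} : Finset β) = {b, c, a} := by
  rw [Finset.insert_comm, Finset.pair_comm a c]

theorem forall_option_of_rotate {β : Type*} {P : Option β → Option β → Option β → Prop}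
    (rotate : ∀ a b c, P a b c → P b c a) (none_left : ∀ a b, P none a b)
    (all_some : ∀ x y z, P (some x) (some y) (some z)) : ∀ a b c, P a b c
  | none, b, c => none_left b c
  | some x, none, c => rotate _ _ _ (rotate _ _ _ (none_left c (some x)))
  | some x, some y, none => rotate _ _ _ (none_left (some x) (some y))
  | some x, some y, some z => all_some x y z

section Edges

variable [DecidableEq α] {H : ThreeHypergraph α}

theorem mem_edges_mycielski {e : Finset (Option (α × Fin 2))} :
    e ∈ (mycielski H).edges ↔
      (e ⊆ (mycielski H).verts ∧ e.card = 3) ∧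
        ((∃ u₁ u₂ u₃ : α, ∃ t₁ t₂ t₃ : Fin 2, ({u₁, u₂, u₃} : Finset α) ∈ H.edges ∧
            e = {some (u₁, t₁), some (u₂, t₂), some (u₃, t₃)}) ∨
          ∃ u ∈ H.verts, e = {some (u, 0), some (u, 1), none}) := by
  simp only [mycielski, Finset.mem_filter, Finset.mem_powersetCard]

theorem some_mem_verts_mycielski {u : α} {t : Fin 2} :
    some (u, t) ∈ (mycielski H).verts ↔ u ∈ H.verts := by
  simp [mycielski]

theorem none_mem_verts_mycielski : none ∈ (mycielski H).verts := by
  simp [mycielski]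

theorem image_map_fst_triple (u v w : α) (r s t : Fin 2) :
    ({some (u, r), some (v, s), some (w, t)} : Finset (Option (α × Fin 2))).image
        (Option.map Prod.fst) = ({u, v, w} : Finset α).image some := by
  simp only [Finset.image_insert, Finset.image_singleton, Option.map_some]

theorem mem_edges_of_some_triple_mem_edges_mycielski {u v w : α} {r s t : Fin 2}
    (h : ({some (u, r), some (v, s), some (w, t)} : Finset (Option (α × Fin 2))) ∈
      (mycielski H).edges) : ({u, v, w} : Finset α) ∈ H.edges := by
  obtain ⟨-, ⟨_, _, _, _, _, _, he, heq⟩ | ⟨x, -, heq⟩⟩ := mem_edges_mycielski.1 h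
  · have himage := congrArg (Finset.image (Option.map Prod.fst)) heq
    rw [image_map_fst_triple, image_map_fst_triple] at himage
    rwa [Finset.image_injective (Option.some_injective _) himage]
  · exact absurd (heq.ge (by simp : none ∈ _)) (by simp)

theorem some_triple_mem_edges_mycielski (hH : H.IsValid) {u v w : α}
    (h : ({u, v, w} : Finset α) ∈ H.edges) (r s t : Fin 2) :
    ({some (u, r), some (v, s), some (w, t)} : Finset (Option (α × Fin 2))) ∈
      (mycielski H).edges := by
  obtain ⟨hcard, hverts⟩ := hH _ h
  refine mem_edges_mycielski.2 ⟨⟨?_, Finset.card_le_three.antisymm ?_⟩,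
    Or.inl ⟨u, v, w, r, s, t, h, rfl⟩⟩
  · simpa only [Finset.insert_subset_iff, Finset.singleton_subset_iff,
      some_mem_verts_mycielski] using hverts
  · rw [← hcard, ← Finset.card_image_of_injective _ (Option.some_injective α),
      ← image_map_fst_triple u v w r s t]
    exact Finset.card_image_le

theorem none_triple_mem_edges_mycielski {a b : Option (α × Fin 2)} :
    ({none, a, b} : Finset (Option (α × Fin 2))) ∈ (mycielski H).edges ↔
      ∃ x ∈ H.verts, a = some (x, 0) ∧ b = some (x, 1) ∨ a = some (x, 1) ∧ b = some (x, 0) := by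
  constructor
  · intro h
    obtain ⟨-, ⟨_, _, _, _, _, _, -, heq⟩ | ⟨x, hx, heq⟩⟩ := mem_edges_mycielski.1 h
    · exact absurd (heq.le (Finset.mem_insert_self none _)) (by simp)
    · have h₀ : some (x, 0) ∈ ({none, a, b} : Finset _) := heq.ge (by simp)
      have h₁ : some (x, 1) ∈ ({none, a, b} : Finset _) := heq.ge (by simp)
      refine ⟨x, hx, ?_⟩
      simp only [Finset.mem_insert, Finset.mem_singleton, reduceCtorEq, false_or] at h₀ h₁
      grind
  · rintro ⟨x, hx, hab⟩
    have heq : ({none, a, b} : Finset (Option (α × Fin 2))) =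
        {some (x, 0), some (x, 1), none} := by
      rcases hab with ⟨rfl, rfl⟩ | ⟨rfl, rfl⟩
      · exact triple_rotate _ _ _
      · rw [triple_rotate, Finset.insert_comm]
    rw [heq]
    refine mem_edges_mycielski.2 ⟨⟨?_, ?_⟩, Or.inr ⟨x, hx, rfl⟩⟩
    · simp only [Finset.insert_subset_iff, Finset.singleton_subset_iff,
        some_mem_verts_mycielski, none_mem_verts_mycielski, hx, and_self]
    · exact Finset.card_eq_three.2 ⟨_, _, _, by simp, by simp, by simp, rfl⟩

end Edges

section Orientation

variable {H : ThreeHypergraph α} {O : α → α → α → Prop}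

theorem mycOrient_some_iff {u v w : α} {r s t : Fin 2} :
    mycOrient H O (some (u, r)) (some (v, s)) (some (w, t)) ↔ O u v w :=
  ⟨fun | .e1 _ _ _ _ _ _ h => h, .e1 _ _ _ _ _ _⟩

theorem mycOrient_none_iff {a b : Option (α × Fin 2)} :
    mycOrient H O none a b ↔ ∃ x ∈ H.verts, a = some (x, 0) ∧ b = some (x, 1) := by
  constructor
  · intro h
    cases h with
    | e2c x hx => exact ⟨x, hx, rfl, rfl⟩
  · rintro ⟨x, hx, rfl, rfl⟩
    exact .e2c x hx

theorem mycOrient_rotate (hO : ∀ u v w, O u v w → O v w u) {a b c : Option (α × Fin 2)}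
    (h : mycOrient H O a b c) : mycOrient H O b c a := by
  cases h with
  | e2a u hu => exact .e2b u hu
  | e2b u hu => exact .e2c u hu
  | e2c u hu => exact .e2a u hu
  | e1 _ _ _ _ _ _ h => exact .e1 _ _ _ _ _ _ (hO _ _ _ h)

theorem mycOrient_rotate_iff (hO : ∀ u v w, O u v w → O v w u) {a b c : Option (α × Fin 2)} :
    mycOrient H O a b c ↔ mycOrient H O b c a :=
  ⟨mycOrient_rotate hO, fun h => mycOrient_rotate hO (mycOrient_rotate hO h)⟩

variable [DecidableEq α]

theorem IsOrientation.not_apply_self_right (hO : IsOrientation H O) (u v : α) : ¬ O u v v :=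
  fun h => (hO.2.2 u v v (hO.1 u v v h)).1 h h

theorem IsOrientation.not_apply_self_left (hO : IsOrientation H O) (u v : α) : ¬ O u u v :=
  fun h => hO.not_apply_self_right v u (hO.2.1 _ _ _ (hO.2.1 _ _ _ h))

theorem mem_edges_of_mycOrient (hH : H.IsValid) (hO : IsOrientation H O) :
    ∀ a b c, mycOrient H O a b c →
      ({a, b, c} : Finset (Option (α × Fin 2))) ∈ (mycielski H).edges := by
  refine forall_option_of_rotate (fun a b c h hbca => ?_) (fun a b h => ?_)
    fun ⟨u, _⟩ ⟨v, _⟩ ⟨w, _⟩ h => ?_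
  · rw [← triple_rotate]
    exact h ((mycOrient_rotate_iff hO.2.1).2 hbca)
  · obtain ⟨x, hx, hab⟩ := mycOrient_none_iff.1 h
    exact none_triple_mem_edges_mycielski.2 ⟨x, hx, Or.inl hab⟩
  · exact some_triple_mem_edges_mycielski hH (hO.1 u v w (mycOrient_some_iff.1 h)) _ _ _

theorem mycOrient_none_iff_not_swap {a b : Option (α × Fin 2)}
    (h : ({none, a, b} : Finset (Option (α × Fin 2))) ∈ (mycielski H).edges) :
    mycOrient H O none a b ↔ ¬ mycOrient H O none b a := by
  obtain ⟨x, hx, ⟨rfl, rfl⟩ | ⟨rfl, rfl⟩⟩ := none_triple_mem_edges_mycielski.1 h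
  · exact iff_of_true (.e2c x hx) nofun
  · exact iff_of_false nofun (not_not_intro (.e2c x hx))

theorem mycOrient_iff_not_swap (hO : IsOrientation H O) :
    ∀ a b c, ({a, b, c} : Finset (Option (α × Fin 2))) ∈ (mycielski H).edges →
      (mycOrient H O a b c ↔ ¬ mycOrient H O a c b) := by
  refine forall_option_of_rotate (fun a b c h hbca => ?_) (fun _ _ => mycOrient_none_iff_not_swap)
    fun ⟨u, _⟩ ⟨v, _⟩ ⟨w, _⟩ h => ?_
  · rw [← mycOrient_rotate_iff hO.2.1, mycOrient_rotate_iff hO.2.1 (a := b)]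
    exact h (by rwa [triple_rotate])
  · rw [mycOrient_some_iff, mycOrient_some_iff]
    exact hO.2.2 u v w (mem_edges_of_some_triple_mem_edges_mycielski h)

theorem isOrientation_mycOrient (hH : H.IsValid) (hO : IsOrientation H O) :
    IsOrientation (mycielski H) (mycOrient H O) :=
  ⟨mem_edges_of_mycOrient hH hO, fun _ _ _ => mycOrient_rotate hO.2.1, mycOrient_iff_not_swap hO⟩

theorem isTransitiveRel_mycOrient (hO : IsTransitiveOrientation H O) :
    IsTransitiveRel (mycOrient H O) := by
  intro a v z c havz hzvc
  cases havz with
  | e2a => cases hzvc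
  | e2b => cases hzvc
  | e2c u =>
    cases hzvc with
    | e1 _ _ w _ _ _ h => exact absurd h (hO.1.not_apply_self_left u w)
  | e1 u _ _ _ _ _ h =>
    cases hzvc with
    | e2a => exact absurd h (hO.1.not_apply_self_right u _)
    | e1 _ _ _ _ _ _ h' => exact .e1 _ _ _ _ _ _ (hO.2 _ _ _ _ h h')

theorem isTransitiveOrientation_mycOrient (hH : H.IsValid) (hO : IsTransitiveOrientation H O) :
    IsTransitiveOrientation (mycielski H) (mycOrient H O) :=
  ⟨isOrientation_mycOrient hH hO.1, isTransitiveRel_mycOrient hO⟩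

end Orientation

/-- Given a transitive orientation `O` of `H`, the induced orientation of `μ(H)` is a
transitive orientation; consequently, if `H` is a comparability 3-hypergraph then so
is `μ(H)`. -/
theorem mycielski_comparability {α : Type*} [DecidableEq α] (H : ThreeHypergraph α)
    (hH : H.IsValid) :
    (∀ O : α → α → α → Prop, IsTransitiveOrientation H O →
      IsTransitiveOrientation (mycielski H) (mycOrient H O)) ∧
    (IsComparability H → IsComparability (mycielski H)) := by
  exact ⟨fun _ => isTransitiveOrientation_mycOrient hH,
    fun ⟨_, hO⟩ => ⟨_, isTransitiveOrientation_mycOrient hH hO⟩⟩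
end

section
/- For every 3-hypergraph H with clique number ω(H) ≥ 3, the clique number of the Mycielski-type 3-hypergraph μ(H) equals that of H: ω(μ(H)) = ω(H). -/
open scoped Classical

/-!
An edge of `μ(H)` through the apex `w` is `w` together with the two copies of a single vertex, so
two distinct members of a clique through `w`, other than `w`, lie in different layers; hence such a
clique has at most three vertices, and each vertex of `H` gives one with exactly three. In a clique
of at least three vertices avoiding `w`, two copies of the same vertex would lie in a common triple,
whose projection to `H` has fewer than three elements and so is not an edge. Such a clique therefore
projects injectively onto a clique of `H`. Conversely, every clique of `H` lifts to a single layer.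
-/

namespace ThreeHypergraph

section Clique

variable {α β : Type*} {H : ThreeHypergraph α} {S : Finset α}

theorem IsClique.card_le_card_verts (hS : H.IsClique S) : S.card ≤ H.verts.card :=
  Finset.card_le_card hS.1

theorem IsClique.card_le_cliqueNumber (hS : H.IsClique S) : S.card ≤ H.cliqueNumber := by
  refine le_csSup ⟨H.verts.card, ?_⟩ ⟨S, hS, rfl⟩
  rintro _ ⟨T, hT, rfl⟩
  exact hT.card_le_card_verts

theorem cliqueNumber_le {n : ℕ} (h : ∀ S, H.IsClique S → S.card ≤ n) : H.cliqueNumber ≤ n := by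
  refine csSup_le' ?_
  rintro _ ⟨S, hS, rfl⟩
  exact h S hS

theorem cliqueNumber_le_card_verts (H : ThreeHypergraph α) : H.cliqueNumber ≤ H.verts.card :=
  cliqueNumber_le fun _ hS => hS.card_le_card_verts

theorem isClique_of_mem_edges (hsub : S ⊆ H.verts) (hS : S ∈ H.edges) (h3 : S.card = 3) :
    H.IsClique S :=
  ⟨hsub, fun _ ht ht3 => Finset.eq_of_subset_of_card_le ht (h3.trans ht3.symm).le ▸ hS⟩

theorem isClique_image_iff [DecidableEq β] {K : ThreeHypergraph β} {f : α → β}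
    (hf : Set.InjOn f S) :
    K.IsClique (S.image f) ↔
      (∀ v ∈ S, f v ∈ K.verts) ∧ ∀ t ⊆ S, t.card = 3 → t.image f ∈ K.edges := by
  have card_image {t : Finset α} (ht : t ⊆ S) : (t.image f).card = t.card :=
    Finset.card_image_of_injOn (hf.mono (Finset.coe_subset.mpr ht))
  refine and_congr Finset.image_subset_iff ⟨fun h t ht ht3 => ?_, fun h t' ht' ht3 => ?_⟩
  · exact h _ (Finset.image_subset_image ht) ((card_image ht).trans ht3)
  · obtain ⟨t, ht, rfl⟩ := Finset.subset_image_iff.mp ht'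
    exact h t ht ((card_image ht).symm.trans ht3)

end Clique

section Mycielski

variable {α : Type*} [DecidableEq α] {H : ThreeHypergraph α}

theorem none_mem_verts_mycielski (H : ThreeHypergraph α) : none ∈ (mycielski H).verts := by
  simp [mycielski]

theorem some_mem_verts_mycielski {p : α × Fin 2} :
    some p ∈ (mycielski H).verts ↔ p.1 ∈ H.verts := by
  simp [mycielski, Prod.ext_iff]

theorem mem_edges_mycielski {e : Finset (Option (α × Fin 2))} :
    e ∈ (mycielski H).edges ↔ (e ⊆ (mycielski H).verts ∧ e.card = 3) ∧
      ((∃ u₁ u₂ u₃ : α, ∃ t₁ t₂ t₃ : Fin 2, {u₁, u₂, u₃} ∈ H.edges ∧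
        e = {some (u₁, t₁), some (u₂, t₂), some (u₃, t₃)}) ∨
      ∃ u ∈ H.verts, e = {some (u, 0), some (u, 1), none}) := by
  simp only [mycielski, Finset.mem_filter, Finset.mem_powersetCard]

theorem map_some_mem_edges_mycielski {T : Finset (α × Fin 2)} :
    T.map .some ∈ (mycielski H).edges ↔
      (∀ p ∈ T, p.1 ∈ H.verts) ∧ T.card = 3 ∧ T.image Prod.fst ∈ H.edges := by
  have hverts : T.map .some ⊆ (mycielski H).verts ↔ ∀ p ∈ T, p.1 ∈ H.verts := by
    simp only [Finset.map_eq_image, Finset.image_subset_iff, Function.Embedding.some_apply,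
      some_mem_verts_mycielski]
  rw [mem_edges_mycielski, Finset.card_map, hverts, and_assoc]
  refine and_congr_right fun _ => and_congr_right fun hT3 => ⟨?_, fun hT => Or.inl ?_⟩
  · rintro (⟨u₁, u₂, u₃, t₁, t₂, t₃, hu, hT⟩ | ⟨u, -, hT⟩)
    · have hT : T = {(u₁, t₁), (u₂, t₂), (u₃, t₃)} :=
        Finset.map_injective .some (by simpa using hT)
      simpa [hT] using hu
    · have : none ∈ T.map .some := hT ▸ by simp
      simp at this
  · obtain ⟨p, q, r, -, -, -, rfl⟩ := Finset.card_eq_three.mp hT3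
    exact ⟨p.1, q.1, r.1, p.2, q.2, r.2, by simpa using hT, by simp⟩

theorem insertNone_mem_edges_mycielski {T : Finset (α × Fin 2)} :
    T.insertNone ∈ (mycielski H).edges ↔ ∃ u ∈ H.verts, T = {(u, 0), (u, 1)} := by
  have fiber (u : α) :
      ({some (u, 0), some (u, 1), none} : Finset (Option (α × Fin 2))) =
        Finset.insertNone {(u, 0), (u, 1)} := by
    ext (_ | p) <;> simp
  rw [mem_edges_mycielski]
  constructor
  · rintro ⟨-, ⟨u₁, u₂, u₃, t₁, t₂, t₃, -, hT⟩ | ⟨u, hu, hT⟩⟩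
    · have : none ∈ T.insertNone := Finset.none_mem_insertNone
      simp [hT] at this
    · exact ⟨u, hu, Finset.insertNone.injective (hT.trans (fiber u))⟩
  · rintro ⟨u, hu, rfl⟩
    refine ⟨⟨?_, by simp⟩, Or.inr ⟨u, hu, (fiber u).symm⟩⟩
    simp [← fiber, Finset.insert_subset_iff, some_mem_verts_mycielski,
      none_mem_verts_mycielski, hu]

theorem isClique_mycielski_map_some_iff {T : Finset (α × Fin 2)}
    (hT : Set.InjOn Prod.fst (T : Set (α × Fin 2))) :
    (mycielski H).IsClique (T.map .some) ↔ H.IsClique (T.image Prod.fst) := by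
  rw [Finset.map_eq_image, isClique_image_iff Function.Embedding.some.injective.injOn,
    isClique_image_iff hT]
  simp only [← Finset.map_eq_image]
  simp only [Function.Embedding.some_apply, some_mem_verts_mycielski]
  refine and_congr_right fun hverts => forall₃_congr fun t ht ht3 => ?_
  rw [map_some_mem_edges_mycielski]
  exact ⟨fun h => h.2.2, fun h => ⟨fun p hp => hverts p (ht hp), ht3, h⟩⟩

theorem IsClique.injOn_fst_of_map_some (hH : H.IsValid) {T : Finset (α × Fin 2)}
    (hT : (mycielski H).IsClique (T.map .some)) (h3 : 3 ≤ T.card) :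
    Set.InjOn Prod.fst (T : Set (α × Fin 2)) := by
  intro p hp q hq hpq
  obtain ⟨U, hpqU, hUT, hU3⟩ : ∃ U, {p, q} ⊆ U ∧ U ⊆ T ∧ U.card = 3 :=
    Finset.exists_subsuperset_card_eq
      (by simpa [Finset.insert_subset_iff] using And.intro hp hq)
      (Finset.card_le_two.trans (by norm_num)) h3
  have hedge : U.map .some ∈ (mycielski H).edges :=
    hT.2 _ (Finset.map_subset_map.mpr hUT) (by rw [Finset.card_map, hU3])
  have hcard : (U.image Prod.fst).card = 3 := (hH _ (map_some_mem_edges_mycielski.mp hedge).2.2).1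
  have hinj : Set.InjOn Prod.fst (U : Set (α × Fin 2)) :=
    Finset.card_image_iff.mp (hcard.trans hU3.symm)
  exact hinj (hpqU (by simp)) (hpqU (by simp)) hpq

theorem IsClique.card_le_two_of_insertNone {T : Finset (α × Fin 2)}
    (hT : (mycielski H).IsClique T.insertNone) : T.card ≤ 2 := by
  have hinj : Set.InjOn Prod.snd (T : Set (α × Fin 2)) := by
    intro p hp q hq hpq
    by_contra hne
    have hsub : ({p, q} : Finset (α × Fin 2)) ⊆ T := by
      simpa [Finset.insert_subset_iff] using And.intro hp hq
    obtain ⟨u, -, hu⟩ := insertNone_mem_edges_mycielski.mp <|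
      hT.2 (Finset.insertNone {p, q}) (Finset.insertNone.monotone hsub)
        (by rw [Finset.card_insertNone, Finset.card_pair hne])
    have hp : p ∈ ({(u, 0), (u, 1)} : Finset (α × Fin 2)) := hu ▸ by simp
    have hq : q ∈ ({(u, 0), (u, 1)} : Finset (α × Fin 2)) := hu ▸ by simp
    have hfst : p.1 = q.1 := by
      simp only [Finset.mem_insert, Finset.mem_singleton] at hp hq
      rcases hp with rfl | rfl <;> rcases hq with rfl | rfl <;> rfl
    exact hne (Prod.ext hfst hpq)
  simpa using Finset.card_le_card_of_injOn (t := Finset.univ) Prod.snd (by simp) hinj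

theorem IsClique.card_le_max_of_mycielski (hH : H.IsValid) {S : Finset (Option (α × Fin 2))}
    (hS : (mycielski H).IsClique S) : S.card ≤ max 3 H.cliqueNumber := by
  by_cases hn : none ∈ S
  · obtain ⟨T, rfl⟩ : ∃ T : Finset (α × Fin 2), S = T.insertNone :=
      ⟨S.eraseNone, by rw [Finset.insertNone_eraseNone, Finset.insert_eq_of_mem hn]⟩
    rw [Finset.card_insertNone]
    exact le_max_of_le_left (Nat.succ_le_succ hS.card_le_two_of_insertNone)
  · obtain ⟨T, rfl⟩ : ∃ T : Finset (α × Fin 2), S = T.map .some :=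
      ⟨S.eraseNone, by rw [Finset.map_some_eraseNone, Finset.erase_eq_of_notMem hn]⟩
    rw [Finset.card_map]
    rcases le_total T.card 3 with h3 | h3
    · exact le_max_of_le_left h3
    · have hinj := hS.injOn_fst_of_map_some hH h3
      rw [← Finset.card_image_of_injOn hinj]
      exact le_max_of_le_right
        ((isClique_mycielski_map_some_iff hinj).mp hS).card_le_cliqueNumber

theorem three_le_cliqueNumber_mycielski (hne : H.verts.Nonempty) :
    3 ≤ (mycielski H).cliqueNumber := by
  obtain ⟨u, hu⟩ := hne
  have hedge : Finset.insertNone {(u, 0), (u, 1)} ∈ (mycielski H).edges :=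
    insertNone_mem_edges_mycielski.mpr ⟨u, hu, rfl⟩
  obtain ⟨hsub, hcard⟩ := (mem_edges_mycielski.mp hedge).1
  exact hcard ▸ (isClique_of_mem_edges hsub hedge hcard).card_le_cliqueNumber

theorem cliqueNumber_le_cliqueNumber_mycielski (H : ThreeHypergraph α) :
    H.cliqueNumber ≤ (mycielski H).cliqueNumber := by
  refine cliqueNumber_le fun S hS => ?_
  have hinj : Set.InjOn Prod.fst (↑(S ×ˢ {(0 : Fin 2)}) : Set (α × Fin 2)) := by
    intro p hp q hq hpq
    simp only [Finset.mem_coe, Finset.mem_product, Finset.mem_singleton] at hp hq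
    exact Prod.ext hpq (hp.2.trans hq.2.symm)
  have himage : (S ×ˢ {(0 : Fin 2)}).image Prod.fst = S :=
    Finset.product_image_fst (Finset.singleton_nonempty 0)
  have hlift := (isClique_mycielski_map_some_iff hinj).mpr (himage.symm ▸ hS)
  simpa using hlift.card_le_cliqueNumber

end Mycielski

end ThreeHypergraph

open ThreeHypergraph in
theorem cliqueNumber_mycielski_general {α : Type*} [DecidableEq α] (H : ThreeHypergraph α)
    (hH : H.IsValid) (hne : H.verts.Nonempty) :
    (mycielski H).cliqueNumber = max 3 H.cliqueNumber :=
  le_antisymm (cliqueNumber_le fun _ hS => hS.card_le_max_of_mycielski hH)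
    (max_le (three_le_cliqueNumber_mycielski hne) (cliqueNumber_le_cliqueNumber_mycielski H))

/-- For every 3-hypergraph `H` with clique number at least `3`,
`ω(μ(H)) = ω(H)`. -/
theorem cliqueNumber_mycielski {α : Type*} [DecidableEq α] (H : ThreeHypergraph α)
    (hH : H.IsValid) (hω : 3 ≤ H.cliqueNumber) :
    (mycielski H).cliqueNumber = H.cliqueNumber := by
  have hne : H.verts.Nonempty :=
    Finset.card_pos.mp ((zero_lt_three.trans_le hω).trans_le H.cliqueNumber_le_card_verts)
  rw [cliqueNumber_mycielski_general H hH hne, max_eq_right hω]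
end

section
/- For every cyclic permutation [φ] of {1,…,n}, the associated 3-hypergraph H_[φ] is an even 3-hypergraph: every 4-element subset of {1,…,n} contains an even number of edges of H_[φ]. -/
open scoped Classical

/-- `i < j < k` are in clockwise order with respect to the cyclic permutation `[φ]` of
`Fin n` if some representative `ψ` of the cyclic equivalence class of `φ` (i.e. some
cyclic shift of `φ`) satisfies `ψ⁻¹ i < ψ⁻¹ j < ψ⁻¹ k`. -/
def Clockwise {n : ℕ} (φ : Equiv.Perm (Fin n)) (i j k : Fin n) : Prop :=
  ∃ m : Fin n, φ.symm i + m < φ.symm j + m ∧ φ.symm j + m < φ.symm k + m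

/-- The `3`-hypergraph associated to a cyclic permutation `[φ]` of `{1, …, n}`
(encoded as `Fin n`): its edges are the triples `{i, j, k}` with `i < j < k` in
clockwise order with respect to `[φ]`. -/
noncomputable def cyclicPermHG (n : ℕ) (φ : Equiv.Perm (Fin n)) : ThreeHypergraph (Fin n) where
  verts := Finset.univ
  edges := (Finset.powersetCard 3 (Finset.univ : Finset (Fin n))).filter
    (fun e => ∃ i j k : Fin n, i < j ∧ j < k ∧ Clockwise φ i j k ∧ e = {i, j, k})

/-- A 3-hypergraph is even if every 4-element subset of its vertex set contains an even
number of edges. -/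
def ThreeHypergraph.IsEven {α : Type*} [DecidableEq α] (H : ThreeHypergraph α) : Prop :=
  ∀ S ⊆ H.verts, S.card = 4 → Even ((H.edges.filter (fun e => e ⊆ S)).card)


/-!
Being in clockwise order with respect to `[φ]` is the strict betweenness relation of the circular
order on `Fin n`, pulled back along `φ⁻¹`. So the question is about four distinct points
`a`, `b`, `c`, `d` of a circular order: an even number of the triples `abc`, `abd`, `acd`, `bcd`
are positively oriented. Swapping `a` and `b` reverses `abc` and `abd` and exchanges `acd` with
`bcd`, which does not affect this parity, so `abc` may be taken to be positively oriented; the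
claim then follows from transitivity.

The parity of the number of true statements among four is expressed by a nested equivalence:
`(p ↔ q) ↔ (r ↔ s)` holds exactly when an even number of `p`, `q`, `r`, `s` do.
-/

section CircularOrder

variable {β : Type*} [CircularOrder β] {a b c d : β}

theorem not_sbtw_iff_sbtw_of_ne (hab : a ≠ b) (hbc : b ≠ c) (hca : c ≠ a) :
    ¬ sbtw a b c ↔ sbtw c b a := by
  rw [sbtw_iff_not_btw, sbtw_iff_not_btw, not_not]
  refine ⟨fun hcba habc => ?_, (btw_total a b c).resolve_left⟩
  rcases btw_antisymm habc hcba with h | h | h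
  exacts [hab h, hbc h, hca h]

theorem sbtw_iff_sbtw_iff_sbtw_of_sbtw (habc : sbtw a b c) (had : a ≠ d) (hbd : b ≠ d)
    (hcd : c ≠ d) : sbtw a b d ↔ (sbtw a c d ↔ sbtw b c d) := by
  have hca : c ≠ a := by
    rintro rfl
    exact sbtw_irrefl_left_right habc
  have hbc : b ≠ c := by
    rintro rfl
    exact sbtw_irrefl_right habc
  by_cases hacd : sbtw a c d
  · have habd : sbtw a b d := sbtw_trans_right habc hacd
    have hcdb : sbtw c d b := sbtw_trans_right hacd.cyclic_left habc.cyclic_right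
    simp only [habd, hacd, hcdb.cyclic_right]
  · have hdca : sbtw d c a := (not_sbtw_iff_sbtw_of_ne hca.symm hcd had.symm).mp hacd
    have habd_iff : sbtw a b d ↔ sbtw d c b := by
      constructor
      · intro habd
        exact sbtw_trans_right hdca habd.cyclic_right
      · intro hdcb
        exact (sbtw_trans_right hdcb.cyclic_right habc.cyclic_left).cyclic_right
    rw [habd_iff, ← not_sbtw_iff_sbtw_of_ne hbc hcd hbd.symm]
    simp only [hacd, false_iff]

theorem sbtw_iff_sbtw_iff_sbtw_iff_sbtw (hab : a ≠ b) (hac : a ≠ c) (had : a ≠ d) (hbc : b ≠ c)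
    (hbd : b ≠ d) (hcd : c ≠ d) : (sbtw a b c ↔ sbtw a b d) ↔ (sbtw a c d ↔ sbtw b c d) := by
  by_cases habc : sbtw a b c
  · simpa only [habc, true_iff] using sbtw_iff_sbtw_iff_sbtw_of_sbtw habc had hbd hcd
  · have hbac : sbtw b a c :=
      ((not_sbtw_iff_sbtw_of_ne hab hbc hac.symm).mp habc).cyclic_left
    have hbad_iff : sbtw b a d ↔ ¬ sbtw a b d := by
      rw [not_sbtw_iff_sbtw_of_ne hab hbd had.symm, sbtw_cyclic]
    have hswap := sbtw_iff_sbtw_iff_sbtw_of_sbtw hbac hbd had hcd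
    tauto

end CircularOrder

section EdgeCount

variable {α : Type*} [DecidableEq α]

theorem card_filter_subset_eq_card_filter_erase_mem {E : Finset (Finset α)} {S : Finset α} {n : ℕ}
    (hE : ∀ e ∈ E, e.card = n) (hS : S.card = n + 1) :
    (E.filter (· ⊆ S)).card = (S.filter (S.erase · ∈ E)).card := by
  symm
  refine Finset.card_nbij S.erase (fun x hx => ?_)
    (S.erase_injOn.mono (Finset.coe_subset.mpr (Finset.filter_subset _ S))) (fun e he => ?_)
  · exact Finset.mem_filter.mpr ⟨(Finset.mem_filter.mp hx).2, Finset.erase_subset x S⟩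
  · obtain ⟨heE, heS⟩ := Finset.mem_filter.mp he
    obtain ⟨x, hx, rfl⟩ := Finset.exists_eq_insert_iff.mpr ⟨heS, by rw [hE e heE, hS]⟩
    have erase_x : (insert x e).erase x = e := Finset.erase_insert hx
    refine ⟨x, Finset.mem_filter.mpr ⟨Finset.mem_insert_self x e, ?_⟩, erase_x⟩
    rwa [erase_x]

theorem ThreeHypergraph.even_card_edges_subset_iff {H : ThreeHypergraph α} (hH : H.IsValid)
    {a b c d : α} (hab : a ≠ b) (hac : a ≠ c) (had : a ≠ d) (hbc : b ≠ c) (hbd : b ≠ d)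
    (hcd : c ≠ d) :
    Even (H.edges.filter (· ⊆ {a, b, c, d})).card ↔
      (({a, b, c} ∈ H.edges ↔ {a, b, d} ∈ H.edges) ↔
        ({a, c, d} ∈ H.edges ↔ {b, c, d} ∈ H.edges)) := by
  have erase_a : ({a, b, c, d} : Finset α).erase a = {b, c, d} := by grind
  have erase_b : ({a, b, c, d} : Finset α).erase b = {a, c, d} := by grind
  have erase_c : ({a, b, c, d} : Finset α).erase c = {a, b, d} := by grind
  have erase_d : ({a, b, c, d} : Finset α).erase d = {a, b, c} := by grind
  have even_ite (p : Prop) [Decidable p] : Even (if p then 1 else 0) ↔ ¬ p := by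
    split_ifs with hp <;> simp [hp]
  rw [card_filter_subset_eq_card_filter_erase_mem (fun e he => (hH e he).1) (by grind),
    Finset.card_filter, Finset.sum_insert (by grind), Finset.sum_insert (by grind),
    Finset.sum_insert (by grind), Finset.sum_singleton, erase_a, erase_b, erase_c, erase_d]
  simp only [Nat.even_add, even_ite]
  tauto

end EdgeCount

section LinearOrder

variable {α : Type*} [LinearOrder α]

theorem exists_lt_lt_lt_of_card_eq_four {S : Finset α} (hS : S.card = 4) :
    ∃ a b c d, a < b ∧ b < c ∧ c < d ∧ S = {a, b, c, d} := by
  let f := S.orderEmbOfFin hS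
  refine ⟨f 0, f 1, f 2, f 3, by simp, by simp, by simp, ?_⟩
  simpa [Fin.univ_succ, eq_comm] using S.image_orderEmbOfFin_univ hS

theorem eq_and_eq_and_eq_of_triple_subset {i j k i' j' k' : α} (hij : i < j) (hjk : j < k)
    (hij' : i' < j') (hjk' : j' < k') (h : ({i, j, k} : Finset α) ⊆ {i', j', k'}) :
    i = i' ∧ j = j' ∧ k = k' := by
  simp only [Finset.insert_subset_iff, Finset.singleton_subset_iff, Finset.mem_insert,
    Finset.mem_singleton] at h
  grind

theorem cyclicPermHG_isEven_general {β : Type*} [CircularOrder β] {H : ThreeHypergraph α}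
    (hH : H.IsValid) {f : α → β} (hf : Set.InjOn f H.verts)
    (mem_edges_iff : ∀ i ∈ H.verts, ∀ j ∈ H.verts, ∀ k ∈ H.verts, i < j → j < k →
      ({i, j, k} ∈ H.edges ↔ sbtw (f i) (f j) (f k))) :
    H.IsEven := by
  unfold ThreeHypergraph.IsEven
  intro S hSV hS
  obtain ⟨a, b, c, d, hab, hbc, hcd, rfl⟩ := exists_lt_lt_lt_of_card_eq_four hS
  have hac := hab.trans hbc
  have hbd := hbc.trans hcd
  have had := hac.trans hcd
  simp only [Finset.insert_subset_iff, Finset.singleton_subset_iff] at hSV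
  obtain ⟨ha, hb, hc, hd⟩ := hSV
  rw [H.even_card_edges_subset_iff hH hab.ne hac.ne had.ne hbc.ne hbd.ne hcd.ne,
    mem_edges_iff a ha b hb c hc hab hbc, mem_edges_iff a ha b hb d hd hab hbd,
    mem_edges_iff a ha c hc d hd hac hcd, mem_edges_iff b hb c hc d hd hbc hcd]
  exact sbtw_iff_sbtw_iff_sbtw_iff_sbtw (hf.ne ha hb hab.ne) (hf.ne ha hc hac.ne)
    (hf.ne ha hd had.ne) (hf.ne hb hc hbc.ne) (hf.ne hb hd hbd.ne) (hf.ne hc hd hcd.ne)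

end LinearOrder

section CyclicPerm

variable {n : ℕ}

theorem fin_sbtw_add_right_iff {x y z m : Fin n} :
    sbtw (x + m) (y + m) (z + m) ↔ sbtw x y z := by
  simp only [Fin.sbtw_iff, Fin.lt_def, Fin.val_add_eq_ite]
  grind

variable {φ : Equiv.Perm (Fin n)} {i j k : Fin n}

theorem clockwise_iff_sbtw : Clockwise φ i j k ↔ sbtw (φ.symm i) (φ.symm j) (φ.symm k) := by
  constructor
  · rintro ⟨m, h⟩
    exact fin_sbtw_add_right_iff.mp (Fin.sbtw_iff.mpr (.inl h))
  · intro h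
    have : NeZero n := ⟨i.pos.ne'⟩
    -- Rotating `φ.symm i` to `0`, the least element, leaves only the unwrapped cyclic order.
    refine ⟨-φ.symm i, ?_⟩
    rw [← fin_sbtw_add_right_iff (m := -φ.symm i)] at h
    simpa [Fin.sbtw_iff] using h

theorem cyclicPermHG_isValid : (cyclicPermHG n φ).IsValid := fun _ he =>
  (Finset.mem_powersetCard.mp (Finset.mem_filter.mp he).1).symm

theorem triple_mem_cyclicPermHG_edges_iff (hij : i < j) (hjk : j < k) :
    {i, j, k} ∈ (cyclicPermHG n φ).edges ↔ sbtw (φ.symm i) (φ.symm j) (φ.symm k) := by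
  rw [← clockwise_iff_sbtw]
  simp only [cyclicPermHG, Finset.mem_filter, Finset.mem_powersetCard_univ]
  constructor
  · rintro ⟨-, i', j', k', hij', hjk', hclockwise, htriple⟩
    obtain ⟨rfl, rfl, rfl⟩ :=
      eq_and_eq_and_eq_of_triple_subset hij hjk hij' hjk' htriple.subset
    exact hclockwise
  · intro hclockwise
    have hcard : ({i, j, k} : Finset (Fin n)).card = 3 :=
      Finset.card_eq_three.mpr ⟨i, j, k, hij.ne, (hij.trans hjk).ne, hjk.ne, rfl⟩
    exact ⟨hcard, i, j, k, hij, hjk, hclockwise, rfl⟩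

end CyclicPerm

/-- For every cyclic permutation `[φ]` of `{1, …, n}`, the associated 3-hypergraph
`H_[φ]` is even. -/
theorem cyclicPermHG_isEven (n : ℕ) (φ : Equiv.Perm (Fin n)) :
    (cyclicPermHG n φ).IsEven :=
  cyclicPermHG_isEven_general cyclicPermHG_isValid φ.symm.injective.injOn
    fun _ _ _ _ _ _ => triple_mem_cyclicPermHG_edges_iff
end

section
/- Let H be an even 3-hypergraph with at least two vertices and let v ∈ V(H). Then the chromatic number of H is at most the chromatic number of the link graph of v: χ(H) ≤ χ(link_H(v)). -/
open scoped Classical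

/-- The adjacency relation of the link graph `link_H(v)`: `u` and `w` are adjacent iff
`{v, u, w}` is an edge of `H`. -/
def linkAdj {α : Type*} [DecidableEq α] (H : ThreeHypergraph α) (v u w : α) : Prop :=
  u ≠ w ∧ ({v, u, w} : Finset α) ∈ H.edges

/-- The chromatic number of a simple graph given by a vertex set `V` and an adjacency
relation `Adj`: the least number of colours in a proper vertex colouring. -/
noncomputable def graphChromaticNumber {α : Type*} (V : Finset α) (Adj : α → α → Prop) : ℕ :=
  sInf {k | ∃ c : α → ℕ, (∀ x ∈ V, c x < k) ∧ ∀ u ∈ V, ∀ w ∈ V, Adj u w → c u ≠ c w}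

/-- The clique number of a simple graph given by a vertex set `V` and an adjacency
relation `Adj`: the largest cardinality of a set of pairwise adjacent vertices. -/
noncomputable def graphCliqueNumber {α : Type*} (V : Finset α) (Adj : α → α → Prop) : ℕ :=
  sSup {m | ∃ S : Finset α, S ⊆ V ∧ S.card = m ∧ ∀ u ∈ S, ∀ w ∈ S, u ≠ w → Adj u w}

/-!
Every edge `e` of `H` contains an edge of the link of `v`. If `v ∈ e` this is `e \ {v}`. Otherwise
the four vertices `e ∪ {v}` span an even, hence different from one, number of edges, so they span
an edge other than `e`; it must pass through `v`, and its other two vertices lie in `e`.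
Consequently a proper colouring of the link, extended to `v` by any colour already in use, leaves no
edge of `H` monochromatic.
-/

/-- A proper `k`-colouring of the graph with vertex set `V` and adjacency relation `Adj`; it is the
condition minimised in `graphChromaticNumber`. As in `ThreeHypergraph.ProperColoring`, colours are
natural numbers below `k`, and the values of the colouring outside `V` are arbitrary. -/
def GraphProperColoring {α : Type*} (V : Finset α) (Adj : α → α → Prop) (k : ℕ) : Prop :=
  ∃ c : α → ℕ, (∀ x ∈ V, c x < k) ∧ ∀ u ∈ V, ∀ w ∈ V, Adj u w → c u ≠ c w

theorem graphProperColoring_graphChromaticNumber {α : Type*} {V : Finset α} {Adj : α → α → Prop}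
    (hirrefl : ∀ u ∈ V, ¬ Adj u u) : GraphProperColoring V Adj (graphChromaticNumber V Adj) := by
  obtain ⟨c, hinj⟩ := Set.countable_iff_exists_injOn.mp V.countable_toSet
  obtain ⟨k, hk⟩ := (V.image c).exists_nat_subset_range
  have hcol : GraphProperColoring V Adj k := by
    refine ⟨c, fun x hx => Finset.mem_range.mp (hk (Finset.mem_image_of_mem c hx)), ?_⟩
    intro u hu w hw hadj hcuw
    obtain rfl := hinj hu hw hcuw
    exact hirrefl u hu hadj
  exact Nat.sInf_mem (s := {k | GraphProperColoring V Adj k}) ⟨k, hcol⟩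

section Link

variable {α : Type*} [DecidableEq α] {H : ThreeHypergraph α} {v u w : α} {e f : Finset α}

theorem linkAdj.symm (h : linkAdj H v u w) : linkAdj H v w u :=
  ⟨h.1.symm, Finset.pair_comm u w ▸ h.2⟩

theorem linkAdj.left_mem (h : linkAdj H v u w) (hH : H.IsValid) : u ∈ H.verts.erase v := by
  obtain ⟨hcard, hsub⟩ := hH _ h.2
  refine Finset.mem_erase.mpr ⟨?_, hsub (by simp)⟩
  rintro rfl
  simp [h.1] at hcard

theorem linkAdj.right_mem (h : linkAdj H v u w) (hH : H.IsValid) : w ∈ H.verts.erase v :=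
  h.symm.left_mem hH

namespace ThreeHypergraph

theorem IsValid.exists_linkAdj_of_mem_of_subset_insert (hH : H.IsValid) (hf : f ∈ H.edges)
    (hvf : v ∈ f) (hfe : f ⊆ insert v e) : ∃ u ∈ e, ∃ w ∈ e, linkAdj H v u w := by
  have hcard : (f.erase v).card = 2 := by rw [Finset.card_erase_of_mem hvf, (hH f hf).1]
  obtain ⟨u, w, huw, hpair⟩ := Finset.card_eq_two.mp hcard
  have hsub : {u, w} ⊆ e := hpair ▸ Finset.subset_insert_iff.mp hfe
  have hedge : {v, u, w} ∈ H.edges := by rwa [← hpair, Finset.insert_erase hvf]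
  exact ⟨u, hsub (by simp), w, hsub (by simp), huw, hedge⟩

theorem IsValid.mem_of_subset_insert_of_ne (hH : H.IsValid) (he : e ∈ H.edges) (hf : f ∈ H.edges)
    (hfe : f ⊆ insert v e) (hne : f ≠ e) : v ∈ f := by
  by_contra hvf
  have hsub : f ⊆ e := (Finset.subset_insert_iff_of_notMem hvf).mp hfe
  exact hne (Finset.eq_of_subset_of_card_le hsub ((hH e he).1.trans (hH f hf).1.symm).le)

theorem IsValid.exists_linkAdj_of_card_filter_ne_one (hH : H.IsValid) (hv : v ∈ H.verts)
    (hspan : ∀ S ⊆ H.verts, v ∈ S → S.card = 4 → (H.edges.filter (fun f => f ⊆ S)).card ≠ 1)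
    (he : e ∈ H.edges) : ∃ u ∈ e, ∃ w ∈ e, linkAdj H v u w := by
  by_cases hve : v ∈ e
  · exact hH.exists_linkAdj_of_mem_of_subset_insert he hve (Finset.subset_insert v e)
  obtain ⟨hcard, hsub⟩ := hH e he
  have hmem : e ∈ H.edges.filter (fun f => f ⊆ insert v e) :=
    Finset.mem_filter.mpr ⟨he, Finset.subset_insert v e⟩
  have hne_one : (H.edges.filter (fun f => f ⊆ insert v e)).card ≠ 1 :=
    hspan (insert v e) (Finset.insert_subset hv hsub) (Finset.mem_insert_self v e)
      (by rw [Finset.card_insert_of_notMem hve, hcard])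
  have hone_lt : 1 < (H.edges.filter (fun f => f ⊆ insert v e)).card :=
    lt_of_le_of_ne (Finset.card_pos.mpr ⟨e, hmem⟩) hne_one.symm
  obtain ⟨f, hf_mem, hne⟩ := Finset.exists_mem_ne hone_lt e
  obtain ⟨hf, hfe⟩ := Finset.mem_filter.mp hf_mem
  exact hH.exists_linkAdj_of_mem_of_subset_insert hf
    (hH.mem_of_subset_insert_of_ne he hf hfe hne) hfe

theorem IsValid.properColoring_of_link (hH : H.IsValid) (hne : (H.verts.erase v).Nonempty)
    (hlink : ∀ e ∈ H.edges, ∃ u ∈ e, ∃ w ∈ e, linkAdj H v u w) {k : ℕ}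
    (hk : GraphProperColoring (H.verts.erase v) (linkAdj H v) k) : H.ProperColoring k := by
  obtain ⟨c, hlt, hc⟩ := hk
  obtain ⟨x, hx⟩ := hne
  refine ⟨Function.update c v (c x), fun y hy => ?_, ?_⟩
  · rcases eq_or_ne y v with rfl | hyv
    · simpa only [Function.update_self] using hlt x hx
    · simpa only [Function.update_of_ne hyv] using hlt y (Finset.mem_erase.mpr ⟨hyv, hy⟩)
  · rintro e he ⟨i, hi⟩
    obtain ⟨u, hue, w, hwe, hadj⟩ := hlink e he
    have hu := hadj.left_mem hH
    have hw := hadj.right_mem hH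
    have hcu : c u = i := by
      simpa only [Function.update_of_ne (Finset.ne_of_mem_erase hu)] using hi u hue
    have hcw : c w = i := by
      simpa only [Function.update_of_ne (Finset.ne_of_mem_erase hw)] using hi w hwe
    exact hc u hu w hw hadj (hcu.trans hcw.symm)

end ThreeHypergraph

end Link

theorem chromaticNumber_le_link_general {α : Type*} [DecidableEq α] (H : ThreeHypergraph α)
    (hH : H.IsValid) (hcard : 2 ≤ H.verts.card) (v : α) (hv : v ∈ H.verts)
    (hspan : ∀ S ⊆ H.verts, v ∈ S → S.card = 4 → (H.edges.filter (fun f => f ⊆ S)).card ≠ 1) :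
    H.chromaticNumber ≤ graphChromaticNumber (H.verts.erase v) (linkAdj H v) := by
  have hne : (H.verts.erase v).Nonempty :=
    (Finset.erase_nonempty hv).mpr (Finset.one_lt_card_iff_nontrivial.mp hcard)
  have hlink : ∀ e ∈ H.edges, ∃ u ∈ e, ∃ w ∈ e, linkAdj H v u w := fun e he =>
    hH.exists_linkAdj_of_card_filter_ne_one hv hspan he
  exact Nat.sInf_le <| hH.properColoring_of_link hne hlink <|
    graphProperColoring_graphChromaticNumber fun u _ hadj => hadj.1 rfl

/-- For an even 3-hypergraph `H` with at least two vertices and a vertex `v`,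
`χ(H) ≤ χ(link_H(v))`. -/
theorem chromaticNumber_le_link {α : Type*} [DecidableEq α] (H : ThreeHypergraph α)
    (hH : H.IsValid) (hcard : 2 ≤ H.verts.card) (heven : H.IsEven)
    (v : α) (hv : v ∈ H.verts) :
    H.chromaticNumber ≤ graphChromaticNumber (H.verts.erase v) (linkAdj H v) :=
  chromaticNumber_le_link_general H hH hcard v hv fun S hS _ h4 hone =>
    Nat.not_even_one (hone ▸ heven S hS h4)
end

section
/- Let H be a 3-hypergraph with a transitive orientation O(H), and let v ∈ V(H). Define a binary relation on V(H) \ {v} by u → w if and only if (v u w) ∈ O(H). Then this relation orients the edges of the link graph link_H(v) (for each edge {u,w} of link_H(v), exactly one of u → w or w → u holds, and u → w implies {u,w} is an edge of link_H(v)) and is transitive (u₁ → u₂ and u₂ → u₃ imply u₁ → u₃); consequently, link_H(v) is a comparability graph. -/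
open scoped Classical

variable {α : Type*}

/-- A comparability graph (given by a vertex set `V` and an adjacency relation `Adj`):
its edges can be oriented, one direction per edge, so that the resulting relation is
transitive. -/
def IsComparabilityGraph {α : Type*} (V : Finset α) (Adj : α → α → Prop) : Prop :=
  ∃ R : α → α → Prop,
    (∀ u ∈ V, ∀ w ∈ V, R u w → Adj u w) ∧
    (∀ u ∈ V, ∀ w ∈ V, Adj u w → (R u w ↔ ¬ R w u)) ∧
    (∀ u ∈ V, ∀ w ∈ V, ∀ x ∈ V, R u w → R w x → R u x)

/-! Rotating `(u v z)` to `(v z u)` turns the transitivity axiom with middle vertex `v` into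
transitivity of the converse of `O v`, hence of `O v` itself. -/

section Orientation

variable {O : α → α → α → Prop}

theorem isTransitiveRel_iff_forall_isTrans (rotate : ∀ u v w, O u v w → O v w u) :
    IsTransitiveRel O ↔ ∀ v, IsTrans α (O v) := by
  have rotate_iff (u v w : α) : O u v w ↔ O v w u :=
    ⟨rotate u v w, fun h => rotate w u v (rotate v w u h)⟩
  constructor
  · intro hO v
    refine ⟨fun u₁ u₂ u₃ h₁₂ h₂₃ => ?_⟩
    rw [← rotate_iff] at h₁₂ h₂₃ ⊢
    exact hO u₃ v u₂ u₁ h₂₃ h₁₂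
  · intro hO u v z w huvz hzvw
    rw [rotate_iff] at huvz hzvw ⊢
    exact (hO v).trans w z u hzvw huvz

variable [DecidableEq α] {H : ThreeHypergraph α} {u v w : α}

namespace IsOrientation

theorem ne_of_rel (hO : IsOrientation H O) (h : O v u w) : u ≠ w := by
  obtain ⟨mem_edges, -, rel_iff_not_swap⟩ := hO
  rintro rfl
  exact (rel_iff_not_swap v u u (mem_edges v u u h)).mp h h

theorem linkAdj_of_rel (hO : IsOrientation H O) (h : O v u w) : linkAdj H v u w :=
  ⟨hO.ne_of_rel h, hO.1 v u w h⟩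

theorem rel_iff_not_swap_of_linkAdj (hO : IsOrientation H O) (h : linkAdj H v u w) :
    O v u w ↔ ¬ O v w u :=
  hO.2.2 v u w h.2

end IsOrientation

theorem IsTransitiveOrientation.isTrans_link (hO : IsTransitiveOrientation H O) (v : α) :
    IsTrans α (O v) := by
  obtain ⟨⟨-, rotate, -⟩, transitive⟩ := hO
  exact (isTransitiveRel_iff_forall_isTrans rotate).mp transitive v

end Orientation

theorem IsComparabilityGraph.of_isTrans {Adj R : α → α → Prop} [IsTrans α R]
    (adj_of_rel : ∀ u w, R u w → Adj u w)
    (rel_iff_not_swap : ∀ u w, Adj u w → (R u w ↔ ¬ R w u)) (V : Finset α) :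
    IsComparabilityGraph V Adj :=
  ⟨R, fun u _ w _ => adj_of_rel u w, fun u _ w _ => rel_iff_not_swap u w,
    fun _ _ _ _ _ _ => _root_.trans⟩

/-- Given a transitive orientation `O` of `H` and a vertex `v`, the relation
`u → w ↔ (v u w) ∈ O` orients the edges of `link_H(v)` and is transitive;
consequently `link_H(v)` is a comparability graph. -/
theorem link_comparability {α : Type*} [DecidableEq α] (H : ThreeHypergraph α)
    (hH : H.IsValid) (O : α → α → α → Prop) (hO : IsTransitiveOrientation H O)
    (v : α) (hv : v ∈ H.verts) :
    (∀ u w : α, O v u w → linkAdj H v u w) ∧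
    (∀ u w : α, linkAdj H v u w → (O v u w ↔ ¬ O v w u)) ∧
    (∀ u₁ u₂ u₃ : α, O v u₁ u₂ → O v u₂ u₃ → O v u₁ u₃) ∧
    IsComparabilityGraph (H.verts.erase v) (linkAdj H v) := by
  have adj_of_rel (u w : α) : O v u w → linkAdj H v u w := hO.1.linkAdj_of_rel
  have rel_iff_not_swap (u w : α) : linkAdj H v u w → (O v u w ↔ ¬ O v w u) :=
    hO.1.rel_iff_not_swap_of_linkAdj
  have : IsTrans α (O v) := hO.isTrans_link v
  exact ⟨adj_of_rel, rel_iff_not_swap, fun _ _ _ => _root_.trans,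
    .of_isTrans adj_of_rel rel_iff_not_swap (H.verts.erase v)⟩
end

section
/- For every integer q ≥ 3 there exist an integer n and a cyclic permutation [φ] of {1,…,n} such that the associated 3-hypergraph H_[φ] satisfies ω(H_[φ]) = q and χ(H_[φ]) = q − 1; hence the bound χ(H) ≤ ω(H) − 1 for cyclic permutation 3-hypergraphs is tight. -/
open scoped Classical

/-!
Put `n = a² + a + 1` and let `x` sit at position `a x mod n`. A triple `i < j < k` is then an edge
exactly when `a (j - i) mod n < a (k - i) mod n`, so the link of `i` is governed by how
`r d = a d mod n` orders the differences `d`. Equal quotients `⌊a d / n⌋ < a` force `r` to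
increase, so an independent set has at most `a + 1` elements, and `n > a (a + 1)` vertices need at
least `a + 1` colours. Since `a (a + 1) ≡ -1`, the function `r` decreases along the positive members
of each residue class modulo `a + 1`. Hence colouring by residues modulo `a + 1` is proper, and the
differences from the least element of a clique to the others lie in distinct classes, so cliques
have at most `a + 2` elements. The initial segment `{0, …, a + 1}`, on which `r d = a d`, is such a
clique.
-/

namespace ThreeHypergraph

variable {α : Type*} {H : ThreeHypergraph α}

/-- An independent set: a set of vertices containing no edge, that is, an admissible colour
class. -/
def IsIndependent (H : ThreeHypergraph α) (S : Finset α) : Prop :=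
  S ⊆ H.verts ∧ ∀ e ∈ H.edges, ¬ e ⊆ S

lemma ProperColoring.card_verts_le {k m : ℕ} (hk : H.ProperColoring k)
    (hm : ∀ S, H.IsIndependent S → S.card ≤ m) : H.verts.card ≤ m * k := by
  obtain ⟨c, hc, hedge⟩ := hk
  have hclass (r : ℕ) : H.IsIndependent {v ∈ H.verts | c v = r} :=
    ⟨Finset.filter_subset _ _, fun e he hsub =>
      hedge e he ⟨r, fun v hv => (Finset.mem_filter.1 (hsub hv)).2⟩⟩
  simpa only [Finset.card_range] using
    Finset.card_le_mul_card_image_of_maps_to (t := Finset.range k)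
      (fun v hv => Finset.mem_range.2 (hc v hv)) m fun r _ => hm _ (hclass r)

end ThreeHypergraph

section Triples

variable {α : Type*} [LinearOrder α]

lemma exists_lt_lt_of_card_eq_three {t : Finset α} (ht : t.card = 3) :
    ∃ i j k, i < j ∧ j < k ∧ t = {i, j, k} := by
  have hmono := (t.orderEmbOfFin ht).strictMono
  refine ⟨_, _, _, hmono (show (0 : Fin 3) < 1 by decide), hmono (show (1 : Fin 3) < 2 by decide),
    ?_⟩
  calc t = Finset.univ.image (t.orderEmbOfFin ht) := (Finset.image_orderEmbOfFin_univ t ht).symm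
    _ = {t.orderEmbOfFin ht 0, t.orderEmbOfFin ht 1, t.orderEmbOfFin ht 2} := by
      rw [show (Finset.univ : Finset (Fin 3)) = {0, 1, 2} by decide]
      simp only [Finset.image_insert, Finset.image_singleton]

/-- The points of `S` above its minimum `i` receive distinct colours under `f i`. -/
lemma card_le_succ_of_link_coloring {S : Finset α} {m : ℕ} (f : α → α → ℕ)
    (hlt : ∀ i ∈ S, ∀ j ∈ S, f i j < m)
    (hne : ∀ i ∈ S, ∀ j ∈ S, ∀ k ∈ S, i < j → j < k → f i j ≠ f i k) :
    S.card ≤ m + 1 := by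
  rcases S.eq_empty_or_nonempty with rfl | hS
  · simp
  have hmin : S.min' hS ∈ S := S.min'_mem hS
  have hne_min {j k : α} (hj : j ∈ S.erase (S.min' hS)) (hk : k ∈ S.erase (S.min' hS))
      (hjk : j < k) : f (S.min' hS) j ≠ f (S.min' hS) k :=
    hne _ hmin j (Finset.mem_of_mem_erase hj) k (Finset.mem_of_mem_erase hk)
      (S.min'_lt_of_mem_erase_min' hS hj) hjk
  have hinj : Set.InjOn (f (S.min' hS)) (S.erase (S.min' hS)) := by
    intro j hj k hk hcolor
    by_contra hjk
    rcases lt_or_gt_of_ne hjk with h | h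
    · exact hne_min hj hk h hcolor
    · exact hne_min hk hj h hcolor.symm
  have hcard : (S.erase (S.min' hS)).card ≤ (Finset.range m).card :=
    Finset.card_le_card_of_injOn _ (fun j hj => Finset.mem_coe.2 <| Finset.mem_range.2 <|
      hlt _ hmin j (Finset.mem_of_mem_erase hj)) hinj
  rw [Finset.card_range] at hcard
  rw [← Finset.card_erase_add_one hmin]
  exact Nat.add_le_add_right hcard 1

end Triples

section CyclicPermutation

variable {n : ℕ} {φ : Equiv.Perm (Fin n)}

/-- Rotating `i` to position `0` is the only representative that has to be tested. -/
lemma clockwise_iff [NeZero n] {i j k : Fin n} :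
    Clockwise φ i j k ↔
      0 < φ.symm j - φ.symm i ∧ φ.symm j - φ.symm i < φ.symm k - φ.symm i := by
  constructor
  · rintro ⟨m, hij, hjk⟩
    rw [← add_sub_add_right_eq_sub (φ.symm j) _ m, ← add_sub_add_right_eq_sub (φ.symm k) _ m]
    rw [Fin.lt_def, Fin.lt_def, Fin.sub_val_of_le hij.le, Fin.sub_val_of_le (hij.trans hjk).le]
    exact ⟨Nat.sub_pos_of_lt hij, Nat.sub_lt_sub_right hij.le hjk⟩
  · rintro ⟨hij, hjk⟩
    refine ⟨-φ.symm i, ?_⟩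
    simpa only [← sub_eq_add_neg, sub_self] using And.intro hij hjk

lemma mem_cyclicPermHG_edges {e : Finset (Fin n)} :
    e ∈ (cyclicPermHG n φ).edges ↔
      ∃ i j k, i < j ∧ j < k ∧ Clockwise φ i j k ∧ e = {i, j, k} := by
  simp only [cyclicPermHG, Finset.mem_filter, Finset.mem_powersetCard_univ,
    and_iff_right_iff_imp]
  rintro ⟨i, j, k, hij, hjk, -, rfl⟩
  exact Finset.card_eq_three.2 ⟨i, j, k, hij.ne, (hij.trans hjk).ne, hjk.ne, rfl⟩

lemma triple_mem_cyclicPermHG_edges {i j k : Fin n} (hij : i < j) (hjk : j < k) :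
    {i, j, k} ∈ (cyclicPermHG n φ).edges ↔ Clockwise φ i j k := by
  rw [mem_cyclicPermHG_edges]
  refine ⟨?_, fun h => ⟨i, j, k, hij, hjk, h, rfl⟩⟩
  rintro ⟨i', j', k', hij', hjk', h, he⟩
  have hi : i' ∈ ({i, j, k} : Finset (Fin n)) := by simp [he]
  have hj : j' ∈ ({i, j, k} : Finset (Fin n)) := by simp [he]
  have hk : k' ∈ ({i, j, k} : Finset (Fin n)) := by simp [he]
  simp only [Finset.mem_insert, Finset.mem_singleton] at hi hj hk
  obtain ⟨rfl, rfl, rfl⟩ : i' = i ∧ j' = j ∧ k' = k := by omega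
  exact h

lemma isClique_cyclicPermHG_iff {S : Finset (Fin n)} :
    (cyclicPermHG n φ).IsClique S ↔
      ∀ i ∈ S, ∀ j ∈ S, ∀ k ∈ S, i < j → j < k → Clockwise φ i j k := by
  constructor
  · rintro ⟨-, hS⟩ i hi j hj k hk hij hjk
    refine (triple_mem_cyclicPermHG_edges hij hjk).1 (hS _ ?_ ?_)
    · simp only [Finset.insert_subset_iff, Finset.singleton_subset_iff]
      exact ⟨hi, hj, hk⟩
    · exact Finset.card_eq_three.2 ⟨i, j, k, hij.ne, (hij.trans hjk).ne, hjk.ne, rfl⟩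
  · refine fun hS => ⟨Finset.subset_univ S, fun t ht hcard => ?_⟩
    obtain ⟨i, j, k, hij, hjk, rfl⟩ := exists_lt_lt_of_card_eq_three hcard
    simp only [Finset.insert_subset_iff, Finset.singleton_subset_iff] at ht
    obtain ⟨hi, hj, hk⟩ := ht
    exact (triple_mem_cyclicPermHG_edges hij hjk).2 (hS i hi j hj k hk hij hjk)

lemma ThreeHypergraph.IsIndependent.not_clockwise {S : Finset (Fin n)}
    (hS : (cyclicPermHG n φ).IsIndependent S) {i j k : Fin n} (hi : i ∈ S) (hj : j ∈ S)
    (hk : k ∈ S) (hij : i < j) (hjk : j < k) : ¬ Clockwise φ i j k := fun h =>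
  hS.2 _ ((triple_mem_cyclicPermHG_edges hij hjk).2 h) <| by
    simp only [Finset.insert_subset_iff, Finset.singleton_subset_iff]
    exact ⟨hi, hj, hk⟩

end CyclicPermutation

section Multiplication

variable {n a : ℕ} [NeZero n]

/-- The cyclic order on `Fin n` in which `x` sits at position `a * x % n`. Positions are given by
the inverse of a permutation, so this is the inverse of multiplication by `a`. -/
noncomputable def mulPerm (h : n.Coprime a) : Equiv.Perm (Fin n) :=
  (Equiv.ofBijective (fun x : Fin n => Fin.ofNat n (a * x)) <|
    Finite.injective_iff_bijective.1 fun x y hxy =>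
      Fin.ext <| (Nat.ModEq.cancel_left_of_coprime h (congrArg Fin.val hxy)).eq_of_lt_of_lt
        x.isLt y.isLt).symm

lemma mulPerm_symm_sub_val (h : n.Coprime a) {i j : Fin n} (hij : i ≤ j) :
    (((mulPerm h).symm j - (mulPerm h).symm i : Fin n) : ℕ) = a * (j - i : ℕ) % n := by
  have hadd : (mulPerm h).symm j = Fin.ofNat n (a * (j - i : ℕ)) + (mulPerm h).symm i := by
    ext
    simp only [mulPerm, Equiv.symm_symm, Equiv.ofBijective_apply, Fin.val_add, Fin.val_ofNat,
      ← Nat.add_mod, ← Nat.mul_add, Nat.sub_add_cancel (Fin.le_def.1 hij)]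
  rw [hadd, add_sub_cancel_right, Fin.val_ofNat]

lemma clockwise_mulPerm_iff (h : n.Coprime a) {i j k : Fin n} (hij : i < j) (hjk : j < k) :
    Clockwise (mulPerm h) i j k ↔ a * (j - i : ℕ) % n < a * (k - i : ℕ) % n := by
  rw [clockwise_iff, ← mulPerm_symm_sub_val h hij.le,
    ← mulPerm_symm_sub_val h (hij.trans hjk).le, ← Fin.lt_def, and_iff_right]
  rw [Fin.pos_iff_ne_zero, sub_ne_zero]
  exact (mulPerm h).symm.injective.ne hij.ne'

lemma card_le_of_isIndependent_mulPerm (h : n.Coprime a) (ha : 0 < a) {S : Finset (Fin n)}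
    (hS : (cyclicPermHG n (mulPerm h)).IsIndependent S) : S.card ≤ a + 1 := by
  refine card_le_succ_of_link_coloring (fun i j => a * (j - i : ℕ) / n) (fun i _ j _ => ?_)
    fun i hi j hj k hk hij hjk hquot => hS.not_clockwise hi hj hk hij hjk ?_
  · exact Nat.div_lt_of_lt_mul <| by
      rw [mul_comm n a]
      exact Nat.mul_lt_mul_of_pos_left ((Nat.sub_le _ _).trans_lt j.isLt) ha
  · have hlt : a * (j - i : ℕ) < a * (k - i : ℕ) :=
      Nat.mul_lt_mul_of_pos_left (Nat.sub_lt_sub_right hij.le hjk) ha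
    rw [← Nat.div_add_mod (a * (j - i : ℕ)) n, ← Nat.div_add_mod (a * (k - i : ℕ)) n,
      hquot] at hlt
    exact (clockwise_mulPerm_iff h hij hjk).2 (Nat.lt_of_add_lt_add_left hlt)

lemma isClique_Iic_mulPerm (h : n.Coprime a) (ha : 0 < a) {m : Fin n} (hm : a * m < n) :
    (cyclicPermHG n (mulPerm h)).IsClique (Finset.Iic m) := by
  have hmod (i : Fin n) {j : Fin n} (hj : j ∈ Finset.Iic m) :
      a * (j - i : ℕ) % n = a * (j - i : ℕ) :=
    Nat.mod_eq_of_lt <| lt_of_le_of_lt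
      (Nat.mul_le_mul_left a <| (Nat.sub_le _ _).trans (Fin.le_def.1 (Finset.mem_Iic.1 hj))) hm
  refine isClique_cyclicPermHG_iff.2 fun i _ j hj k hk hij hjk => ?_
  rw [clockwise_mulPerm_iff h hij hjk, hmod i hj, hmod i hk]
  exact Nat.mul_lt_mul_of_pos_left (Nat.sub_lt_sub_right hij.le hjk) ha

end Multiplication

section SqAddSelfAddOne

variable {a : ℕ}

lemma coprime_sq_add_self_add_one (a : ℕ) : (a ^ 2 + a + 1).Coprime a := by
  rw [show a ^ 2 + a + 1 = 1 + a * (a + 1) by ring, Nat.coprime_add_mul_left_left]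
  exact Nat.coprime_one_left a

lemma mul_mod_sq_add_self_add_one_lt_of_modEq {d e : ℕ} (hd : 0 < d) (hde : d < e)
    (he : e < a ^ 2 + a + 1) (hmod : d ≡ e [MOD a + 1]) :
    a * e % (a ^ 2 + a + 1) < a * d % (a ^ 2 + a + 1) := by
  obtain ⟨t, ht⟩ := (Nat.modEq_iff_dvd' hde.le).1 hmod
  obtain rfl : e = d + (a + 1) * t := by omega
  have ht0 : 0 < t := Nat.pos_of_ne_zero (by rintro rfl; simp at hde)
  set r := a * d % (a ^ 2 + a + 1)
  have hr : r ≡ a * d [MOD a ^ 2 + a + 1] := Nat.mod_modEq _ _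
  have hdvd : a ^ 2 + a + 1 ∣ (a + 1) * r + d := by
    rw [← Nat.modEq_zero_iff_dvd]
    calc (a + 1) * r + d ≡ (a + 1) * (a * d) + d [MOD a ^ 2 + a + 1] :=
          (hr.mul_left _).add_right _
      _ = (a ^ 2 + a + 1) * d := by ring
      _ ≡ 0 [MOD a ^ 2 + a + 1] := Nat.modEq_zero_iff_dvd.2 (dvd_mul_right _ _)
  have htr : t < r := by
    have : a ^ 2 + a + 1 ≤ (a + 1) * r + d := Nat.le_of_dvd (by omega) hdvd
    exact Nat.lt_of_mul_lt_mul_left (a := a + 1) (by omega)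
  have hshift : a * (d + (a + 1) * t) ≡ r - t [MOD a ^ 2 + a + 1] := by
    refine Nat.ModEq.add_right_cancel' t ?_
    calc a * (d + (a + 1) * t) + t = a * d + (a ^ 2 + a + 1) * t := by ring
      _ ≡ a * d [MOD a ^ 2 + a + 1] := by simp [Nat.ModEq]
      _ ≡ r [MOD a ^ 2 + a + 1] := hr.symm
      _ = r - t + t := (Nat.sub_add_cancel htr.le).symm
  calc a * (d + (a + 1) * t) % (a ^ 2 + a + 1) = (r - t) % (a ^ 2 + a + 1) := hshift
    _ ≤ r - t := Nat.mod_le _ _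
    _ < r := Nat.sub_lt_self ht0 htr.le

/-- The extremal cyclic order on `a² + a + 1` points, with clique number `a + 2` and
chromatic number `a + 1` when `a > 0`: multiplication by `a` gives the positions. -/
noncomputable abbrev tightPerm (a : ℕ) : Equiv.Perm (Fin (a ^ 2 + a + 1)) :=
  mulPerm (coprime_sq_add_self_add_one a)

lemma not_clockwise_tightPerm_of_modEq {i j k : Fin (a ^ 2 + a + 1)} (hij : i < j) (hjk : j < k)
    (hmod : (j - i : ℕ) ≡ (k - i : ℕ) [MOD a + 1]) :
    ¬ Clockwise (tightPerm a) i j k := by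
  rw [clockwise_mulPerm_iff _ hij hjk]
  exact (mul_mod_sq_add_self_add_one_lt_of_modEq (Nat.sub_pos_of_lt hij)
    (Nat.sub_lt_sub_right hij.le hjk) ((Nat.sub_le _ _).trans_lt k.isLt) hmod).not_gt

lemma card_le_of_isClique_tightPerm {S : Finset (Fin (a ^ 2 + a + 1))}
    (hS : (cyclicPermHG _ (tightPerm a)).IsClique S) : S.card ≤ a + 2 :=
  card_le_succ_of_link_coloring (fun i j => (j - i : ℕ) % (a + 1))
    (fun _ _ _ _ => Nat.mod_lt _ a.succ_pos)
    fun i hi j hj k hk hij hjk hmod => not_clockwise_tightPerm_of_modEq hij hjk hmod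
      (isClique_cyclicPermHG_iff.1 hS i hi j hj k hk hij hjk)

lemma properColoring_tightPerm : (cyclicPermHG _ (tightPerm a)).ProperColoring (a + 1) := by
  refine ⟨fun i => i % (a + 1), fun i _ => Nat.mod_lt _ a.succ_pos, ?_⟩
  rintro e he ⟨c, hc⟩
  obtain ⟨i, j, k, hij, hjk, hclock, rfl⟩ := mem_cyclicPermHG_edges.1 he
  have hzero {l : Fin (a ^ 2 + a + 1)} (hil : i < l) (hl : l ∈ ({i, j, k} : Finset _)) :
      (l - i : ℕ) ≡ 0 [MOD a + 1] := by
    have hmod : (i : ℕ) ≡ l [MOD a + 1] := (hc i (by simp)).trans (hc l hl).symm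
    exact Nat.modEq_zero_iff_dvd.2 ((Nat.modEq_iff_dvd' hil.le).1 hmod)
  exact not_clockwise_tightPerm_of_modEq hij hjk
    ((hzero hij (by simp)).trans (hzero (hij.trans hjk) (by simp)).symm) hclock

lemma cliqueNumber_tightPerm (ha : 0 < a) :
    (cyclicPermHG _ (tightPerm a)).cliqueNumber = a + 2 := by
  have hlt : a + 1 < a ^ 2 + a + 1 := by nlinarith
  refine IsGreatest.csSup_eq ⟨⟨Finset.Iic ⟨a + 1, hlt⟩, ?_, Fin.card_Iic _⟩, ?_⟩
  · exact isClique_Iic_mulPerm _ ha (by dsimp only; nlinarith)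
  · rintro m ⟨S, hS, rfl⟩
    exact card_le_of_isClique_tightPerm hS

lemma chromaticNumber_tightPerm (ha : 0 < a) :
    (cyclicPermHG _ (tightPerm a)).chromaticNumber = a + 1 := by
  refine IsLeast.csInf_eq ⟨properColoring_tightPerm, fun k hk => ?_⟩
  have hcard : a ^ 2 + a + 1 ≤ (a + 1) * k := by
    simpa only [cyclicPermHG, Finset.card_univ, Fintype.card_fin] using
      hk.card_verts_le fun S => card_le_of_isIndependent_mulPerm _ ha
  have : (a + 1) * a < (a + 1) * k := by linarith
  exact Nat.lt_of_mul_lt_mul_left this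

end SqAddSelfAddOne

/-- For every `q ≥ 3` there is a cyclic permutation `[φ]` of some `{1, …, n}` with
`ω(H_[φ]) = q` and `χ(H_[φ]) = q − 1`; so the bound `χ ≤ ω − 1` is tight. -/
theorem cyclicPermHG_bound_tight (q : ℕ) (hq : 3 ≤ q) :
    ∃ (n : ℕ) (φ : Equiv.Perm (Fin n)),
      (cyclicPermHG n φ).cliqueNumber = q ∧
      (cyclicPermHG n φ).chromaticNumber = q - 1 := by
  obtain ⟨a, rfl⟩ := Nat.exists_eq_add_of_le' (show 2 ≤ q by omega)
  have ha : 0 < a := by omega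
  exact ⟨_, tightPerm a, cliqueNumber_tightPerm ha, chromaticNumber_tightPerm ha⟩
end

section
/- For every finite family F of closed arcs in the circle, the circle interval 3-hypergraph H_F admits a transitive orientation; that is, every circle interval 3-hypergraph is a comparability 3-hypergraph. -/
open scoped Classical

variable {α : Type*}

/-- A closed arc in the circle `S¹ = ℝ/ℤ`: the image of a closed interval `[a, b]`
(with `a ≤ b`) under the quotient map `ℝ → ℝ/ℤ`. -/
def IsClosedArc (A : Set UnitAddCircle) : Prop :=
  ∃ a b : ℝ, a ≤ b ∧ A = (fun x : ℝ => (x : UnitAddCircle)) '' Set.Icc a b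

/-- The circle interval 3-hypergraph associated to a finite family `F` of subsets of
the circle: vertices are the indices `{1, …, m}`, and the edges are the triples of
indices whose corresponding sets are pairwise disjoint. -/
noncomputable def circleHG (m : ℕ) (F : Fin m → Set UnitAddCircle) :
    ThreeHypergraph (Fin m) where
  verts := Finset.univ
  edges := (Finset.powersetCard 3 (Finset.univ : Finset (Fin m))).filter
    (fun e => ∀ i ∈ e, ∀ j ∈ e, i ≠ j → Disjoint (F i) (F j))

/-!
Pick a point `a i` in each set `F i` and orient an edge `{i, j, k}` according to the cyclic order
of `a i`, `a j`, `a k`. If `(u v z)` and `(z v w)` are oriented edges, then `a v` and `a z` separate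
`a u` from `a w` on the circle. Neither `F u` nor `F w` contains `a v` or `a z`, so these two
cyclically convex sets stay on opposite sides and are disjoint. Hence `{u, v, w}` is an edge, and
its orientation comes from transitivity of the cyclic order.
-/

section CircularOrder

variable {X : Type*} [CircularOrder X]

theorem sbtw_iff_not_sbtw_swap_s18 {x y z : X} (hxy : x ≠ y) (hyz : y ≠ z) (hzx : z ≠ x) :
    sbtw x y z ↔ ¬ sbtw x z y := by
  rw [← btw_iff_not_sbtw, btw_cyclic]
  refine ⟨fun h => h.btw, fun h => h.sbtw_of_not_btw fun h' => ?_⟩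
  rcases h.antisymm h' with h | h | h
  exacts [hxy h, hyz h, hzx h]

theorem disjoint_cIoo_swap (p q : X) : Disjoint (Set.cIoo p q) (Set.cIoo q p) :=
  Set.disjoint_left.2 fun _ h h' => h.not_sbtw h'

/-- Cyclic convexity of a set in a circular order: two points of the set are never separated by two
points outside it, so that the set lies on one side of any two points it avoids. -/
def IsCyclicallyConvex (A : Set X) : Prop :=
  ∀ ⦃p⦄, p ∉ A → ∀ ⦃q⦄, q ∉ A → (A ∩ Set.cIoo p q).Nonempty → A ⊆ Set.cIoo p q

theorem IsCyclicallyConvex.disjoint_of_sbtw {A B : Set X} {p q x y : X}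
    (hA : IsCyclicallyConvex A) (hB : IsCyclicallyConvex B)
    (hpA : p ∉ A) (hqA : q ∉ A) (hpB : p ∉ B) (hqB : q ∉ B)
    (hxA : x ∈ A) (hx : sbtw p x q) (hyB : y ∈ B) (hy : sbtw q y p) : Disjoint A B :=
  (disjoint_cIoo_swap p q).mono (hA hpA hqA ⟨x, hxA, hx⟩) (hB hqB hpB ⟨y, hyB, hy⟩)

end CircularOrder

section AddCircle

variable {𝕜 : Type*} [AddCommGroup 𝕜] [LinearOrder 𝕜] [IsOrderedAddMonoid 𝕜] [Archimedean 𝕜]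
  {T : 𝕜} [Fact (0 < T)]

theorem sbtw_coe_addCircle_iff {p x q : 𝕜} (hx : x ∈ Set.Ioc p (p + T))
    (hq : q ∈ Set.Ico p (p + T)) : sbtw (p : AddCircle T) x q ↔ x < q := by
  have hT : 0 < T := Fact.out
  have hbtw : btw (p : AddCircle T) q x ↔ toIcoMod hT p q ≤ toIocMod hT p x :=
    QuotientAddGroup.btw_coe_iff
  rw [sbtw_iff_not_btw, btw_cyclic, hbtw, (toIcoMod_eq_self hT).2 hq, (toIocMod_eq_self hT).2 hx,
    not_le]

theorem isCyclicallyConvex_image_coe_of_ordConnected {S : Set 𝕜} (hS : S.OrdConnected) :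
    IsCyclicallyConvex ((fun x : 𝕜 => (x : AddCircle T)) '' S) := by
  rintro P hP Q hQ ⟨_, ⟨t, htS, rfl⟩, ht⟩
  -- Lifting `P` to the period before `t`, and `Q` to the period after that lift, makes the cyclic
  -- order of `P`, `t`, `Q` the linear order of the lifts.
  obtain ⟨p, hp, rfl⟩ := (AddCircle.coe_image_Ico_eq T (t - T)).superset (Set.mem_univ P)
  obtain ⟨q, hq, rfl⟩ := (AddCircle.coe_image_Ico_eq T p).superset (Set.mem_univ Q)
  have hpS : p ∉ S := fun h => hP ⟨p, h, rfl⟩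
  have hqS : q ∉ S := fun h => hQ ⟨q, h, rfl⟩
  have hpt : p < t := by simpa only [sub_add_cancel] using hp.2
  have htq : t < q := (sbtw_coe_addCircle_iff ⟨hpt, sub_le_iff_le_add.1 hp.1⟩ hq).1 ht
  rintro _ ⟨s, hsS, rfl⟩
  have hps : p < s := not_le.1 fun h => hpS (hS.out hsS htS ⟨h, hpt.le⟩)
  have hsq : s < q := not_le.1 fun h => hqS (hS.out htS hsS ⟨htq.le, h⟩)
  exact (sbtw_coe_addCircle_iff ⟨hps, (hsq.trans hq.2).le⟩ hq).2 hsq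

end AddCircle

theorem IsClosedArc.nonempty {A : Set UnitAddCircle} (hA : IsClosedArc A) : A.Nonempty := by
  obtain ⟨a, b, hab, rfl⟩ := hA
  exact (Set.nonempty_Icc.2 hab).image _

theorem IsClosedArc.isCyclicallyConvex {A : Set UnitAddCircle} (hA : IsClosedArc A) :
    IsCyclicallyConvex A := by
  obtain ⟨a, b, -, rfl⟩ := hA
  exact isCyclicallyConvex_image_coe_of_ordConnected Set.ordConnected_Icc

section Hypergraph

variable {ι X : Type*} {H : ThreeHypergraph ι} {F : ι → Set X} {a : ι → X}

/-- `H` is the disjointness `3`-hypergraph of the family `F`: its edges are the triples of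
indices whose sets are pairwise disjoint. This extends `circleHG` to arbitrary index types and
ambient spaces; `H.verts` is left free because orientations only involve the edges. -/
def IsDisjointnessHypergraph (H : ThreeHypergraph ι) (F : ι → Set X) : Prop :=
  ∀ e, e ∈ H.edges ↔ e.card = 3 ∧ (e : Set ι).PairwiseDisjoint F

theorem isDisjointnessHypergraph_circleHG {m : ℕ} (F : Fin m → Set UnitAddCircle) :
    IsDisjointnessHypergraph (circleHG m F) F := by
  intro e
  simp only [circleHG, Finset.mem_filter, Finset.mem_powersetCard_univ]
  rfl

theorem IsDisjointnessHypergraph.triple_mem_edges_iff [DecidableEq ι]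
    (hH : IsDisjointnessHypergraph H F) (hF : ∀ i, (F i).Nonempty) {u v w : ι} :
    {u, v, w} ∈ H.edges ↔ Disjoint (F u) (F v) ∧ Disjoint (F v) (F w) ∧ Disjoint (F w) (F u) := by
  have ne_of_disjoint {i j : ι} (h : Disjoint (F i) (F j)) : i ≠ j := by
    rintro rfl
    exact (hF i).ne_empty (disjoint_self.1 h)
  rw [hH, Finset.card_triple_eq_three_iff]
  constructor
  · rintro ⟨⟨huv, huw, hvw⟩, hd⟩
    exact ⟨hd (by simp) (by simp) huv, hd (by simp) (by simp) hvw, hd (by simp) (by simp) huw.symm⟩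
  · rintro ⟨huv, hvw, hwu⟩
    refine ⟨⟨ne_of_disjoint huv, (ne_of_disjoint hwu).symm, ne_of_disjoint hvw⟩, ?_⟩
    simp [Set.pairwiseDisjoint_insert, huv, hvw, hwu.symm]

variable [DecidableEq ι] [CircularOrder X]

/-- The orientation of the edges of `H` induced by points `a i` of a circular order: each edge is
read in the cyclic order of the points attached to its vertices. -/
def cyclicOrientation (H : ThreeHypergraph ι) (a : ι → X) (u v w : ι) : Prop :=
  {u, v, w} ∈ H.edges ∧ sbtw (a u) (a v) (a w)

theorem isOrientation_cyclicOrientation_of_ne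
    (ha : ∀ ⦃u v w⦄, {u, v, w} ∈ H.edges → a u ≠ a v ∧ a v ≠ a w ∧ a w ≠ a u) :
    IsOrientation H (cyclicOrientation H a) := by
  refine ⟨fun u v w h => h.1, fun u v w h => ⟨?_, h.2.cyclic_left⟩, fun u v w he => ?_⟩
  · rw [Finset.pair_comm, Finset.insert_comm]
    exact h.1
  · have he' : {u, w, v} ∈ H.edges := Finset.pair_comm v w ▸ he
    obtain ⟨huv, hvw, hwu⟩ := ha he
    simpa only [cyclicOrientation, he, he', true_and] using sbtw_iff_not_sbtw_swap_s18 huv hvw hwu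

theorem IsDisjointnessHypergraph.isOrientation_cyclicOrientation
    (hH : IsDisjointnessHypergraph H F) (ha : ∀ i, a i ∈ F i) :
    IsOrientation H (cyclicOrientation H a) := by
  refine isOrientation_cyclicOrientation_of_ne fun u v w he => ?_
  obtain ⟨huv, hvw, hwu⟩ := (hH.triple_mem_edges_iff fun i => ⟨a i, ha i⟩).1 he
  exact ⟨huv.ne_of_mem (ha u) (ha v), hvw.ne_of_mem (ha v) (ha w), hwu.ne_of_mem (ha w) (ha u)⟩

theorem IsDisjointnessHypergraph.isTransitiveRel_cyclicOrientation
    (hH : IsDisjointnessHypergraph H F) (hF : ∀ i, IsCyclicallyConvex (F i))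
    (ha : ∀ i, a i ∈ F i) : IsTransitiveRel (cyclicOrientation H a) := by
  have hne (i : ι) : (F i).Nonempty := ⟨a i, ha i⟩
  have notMem {i j : ι} (h : Disjoint (F i) (F j)) : a i ∉ F j := h.notMem_of_mem_left (ha i)
  rintro u v z w ⟨huvz, hs⟩ ⟨hzvw, hs'⟩
  obtain ⟨huv, -, hzu⟩ := (hH.triple_mem_edges_iff hne).1 huvz
  obtain ⟨-, hvw, hwz⟩ := (hH.triple_mem_edges_iff hne).1 hzvw
  have hwu : Disjoint (F w) (F u) :=
    (hF w).disjoint_of_sbtw (hF u) (notMem hvw) (notMem hwz.symm) (notMem huv.symm) (notMem hzu)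
      (ha w) hs'.cyclic_left (ha u) hs.cyclic_right
  exact ⟨(hH.triple_mem_edges_iff hne).2 ⟨huv, hvw, hwu⟩,
    (hs'.cyclic_left.trans_right hs.cyclic_left).cyclic_right⟩

theorem circleHG_comparability_general (hH : IsDisjointnessHypergraph H F)
    (hne : ∀ i, (F i).Nonempty) (hF : ∀ i, IsCyclicallyConvex (F i)) : IsComparability H := by
  choose a ha using hne
  exact ⟨cyclicOrientation H a, hH.isOrientation_cyclicOrientation ha,
    hH.isTransitiveRel_cyclicOrientation hF ha⟩

end Hypergraph

/-- Every circle interval 3-hypergraph is a comparability 3-hypergraph. -/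
theorem circleHG_comparability (m : ℕ)
    (F : Fin m → Set UnitAddCircle) (hF : ∀ i, IsClosedArc (F i)) :
    IsComparability (circleHG m F) :=
  circleHG_comparability_general (isDisjointnessHypergraph_circleHG F)
    (fun i => (hF i).nonempty) (fun i => (hF i).isCyclicallyConvex)
end
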